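/- arXiv:2209.13440 — 2 statements merged into one kernel-verified Lean document; each statement's English description precedes it below -/
import Mathlib

section
/- Let Φ₁, Φ₂ : ℂⁿ → ℝ be real-quadratic weights with positive definite Levi matrices, with Φ₁(x) < Φ₂(x) for all x ∈ ℂⁿ \ {0}. Let M = 𝐀_{Φ₂}⁻¹𝐀_{Φ₁} and let T be an n×n complex symmetric matrix whose graph {(x, Tx) : x ∈ ℂⁿ} equals the sum of the eigenspaces of M for eigenvalues in the real interval (0,1). Define g_T(x) = exp(πi T x·x). Then 0 < ‖g_T‖_{H_{Φ₁}} < ∞, ‖g_T‖_{H_{Φ₂}} < ∞, and ‖g_T‖_{H_{Φ₂}} / ‖g_T‖_{H_{Φ₁}} = sup{‖f‖_{H_{Φ₂}}/‖f‖_{H_{Φ₁}} : f entire on ℂⁿ, 0 < ‖f‖_{H_{Φ₁}} < ∞}; i.e. the Gaussian g_T witnesses the norm of the embedding H_{Φ₁} → H_{Φ₂}. -/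
open MeasureTheory Real Matrix
open scoped ENNReal ComplexOrder

noncomputable section

/-- Bilinear dot product on ℂⁿ. -/
def dotC {n : ℕ} (x y : Fin n → ℂ) : ℂ := ∑ j, x j * y j

/-- The real-quadratic weight Φ(x) = (1/2)(L x·x̄ + Re(P x·x)). -/
def weight {n : ℕ} (L P : Matrix (Fin n) (Fin n) ℂ) (x : Fin n → ℂ) : ℝ :=
  (1 / 2) * ((dotC (L.mulVec x) (star x)).re + (dotC (P.mulVec x) x).re)

/-- Squared H_Φ norm, valued in [0,∞]. -/
def HPhiNormSq {n : ℕ} (Φ : (Fin n → ℂ) → ℝ) (f : (Fin n → ℂ) → ℂ) : ℝ≥0∞ :=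
  ∫⁻ x, ENNReal.ofReal (‖f x‖ ^ 2 * Real.exp (-4 * π * Φ x))

/-- H_Φ norm, valued in [0,∞]. -/
def HPhiNorm {n : ℕ} (Φ : (Fin n → ℂ) → ℝ) (f : (Fin n → ℂ) → ℂ) : ℝ≥0∞ :=
  HPhiNormSq Φ f ^ (1 / 2 : ℝ)

/-- Entrywise complex conjugate of a matrix. -/
def conjM {m : Type*} (M : Matrix m m ℂ) : Matrix m m ℂ := M.map (starRingEnd ℂ)

/-- The matrix 𝐀_Φ associated with the weight with Levi matrix L and pluriharmonic part P. -/
def Amat {n : ℕ} (L P : Matrix (Fin n) (Fin n) ℂ) :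
    Matrix (Fin n ⊕ Fin n) (Fin n ⊕ Fin n) ℂ :=
  Matrix.fromBlocks (-(conjM L⁻¹ * P)) (Complex.I • conjM L⁻¹)
    (Complex.I • (L - conjM (P * L⁻¹) * P)) (-(conjM (P * L⁻¹)))

/-- Norm of the embedding H_{Φ₁} → H_{Φ₂}. -/
def embedNorm {n : ℕ} (Φ₁ Φ₂ : (Fin n → ℂ) → ℝ) : ℝ≥0∞ :=
  ⨆ f : {f : (Fin n → ℂ) → ℂ //
      Differentiable ℂ f ∧ 0 < HPhiNorm Φ₁ f ∧ HPhiNorm Φ₁ f ≠ ⊤},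
    HPhiNorm Φ₂ f.1 / HPhiNorm Φ₁ f.1

/-- The complex symplectic form on ℂ^{2n}. -/
def symp {n : ℕ} (X Y : Fin n ⊕ Fin n → ℂ) : ℂ :=
  ∑ j, X (Sum.inr j) * Y (Sum.inl j) - ∑ j, Y (Sum.inr j) * X (Sum.inl j)

/-- The phase-space shift S_Y. -/
def shiftOp {n : ℕ} (Y : (Fin n → ℂ) × (Fin n → ℂ)) (f : (Fin n → ℂ) → ℂ)
    (x : Fin n → ℂ) : ℂ :=
  Complex.exp (2 * (π : ℂ) * Complex.I * (-(1 / 2) * dotC Y.1 Y.2 + dotC Y.2 x)) * f (x - Y.1)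

/-!
For `f = g_T h` the norm of `f` in `H_Φ` is the norm of `h` for the weight with `P - iT` in place
of `P`, so the claim is that constants maximise the ratio of the norms for these new weights `Ψ₁`,
`Ψ₂`.

Write `B = (Lᵀ)⁻¹ P` and `G = L - P̄ (Lᵀ)⁻¹ P` for the new weights. The graph of `T` is invariant
under `𝐀_{Φ₂}⁻¹ 𝐀_{Φ₁}`, which acts on it through a matrix `D` diagonalisable with spectrum in
`(0, 1)`; comparing the two components gives `B₁ = B₂ D` and `G₁ = G₂ D`. Since `Ψ₁ < Ψ₂` forces
`G₂ - G₁ > 0`, the spectrum of `D` forces `G₁ > 0`, hence the finiteness of all Gaussian integrals.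
Read as densities, `e^{-4πΨⱼ}` have covariances proportional to `Gⱼ⁻¹` and pseudo-covariances
proportional to `Gⱼ⁻¹ Bⱼ*`, and the latter agree. Hence `e^{-4πΨ₁}` is up to a constant the
convolution of `e^{-4πΨ₂}` with a circle-invariant Gaussian of covariance proportional to
`G₁⁻¹ - G₂⁻¹ > 0`, and the sub-mean value property of `|h²|` gives the inequality, with equality for
constant `h`.
-/

section Eigenspaces

variable {K V W κ : Type*} [Field K] [AddCommGroup V] [Module K V] [AddCommGroup W] [Module K W]

theorem exists_comp_eq_comp_and_iSup_eigenspace_eq_top {γ : V →ₗ[K] W}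
    (hγ : Function.Injective γ) (f : Module.End K W) (c : κ → K)
    (hrange : LinearMap.range γ = ⨆ i, f.eigenspace (c i)) :
    ∃ D : Module.End K V, γ ∘ₗ D = f ∘ₗ γ ∧ ⨆ i, D.eigenspace (c i) = ⊤ := by
  have hmaps : ∀ i, ∀ w ∈ f.eigenspace (c i), f w ∈ f.eigenspace (c i) := fun i w hw => by
    rw [Module.End.mem_eigenspace_iff.1 hw]
    exact Submodule.smul_mem _ _ hw
  have hinv : LinearMap.range γ ≤ (LinearMap.range γ).comap f := by
    rw [hrange]
    exact iSup_le fun i w hw => Submodule.mem_iSup_of_mem i (hmaps i w hw)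
  let e := LinearEquiv.ofInjective γ hγ
  let D : Module.End K V := e.symm.toLinearMap ∘ₗ f.restrict hinv ∘ₗ e.toLinearMap
  have hD : ∀ x, γ (D x) = f (γ x) := fun x =>
    congrArg Subtype.val (e.apply_symm_apply (f.restrict hinv (e x)))
  refine ⟨D, LinearMap.ext hD, ?_⟩
  have hmap : ∀ i, f.eigenspace (c i) ≤ (D.eigenspace (c i)).map γ := fun i w hw => by
    obtain ⟨v, rfl⟩ : w ∈ LinearMap.range γ := hrange ▸ Submodule.mem_iSup_of_mem i hw
    refine ⟨v, Module.End.mem_eigenspace_iff.2 (hγ ?_), rfl⟩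
    rw [hD, map_smul, Module.End.mem_eigenspace_iff.1 hw]
  apply Submodule.map_injective_of_injective hγ
  refine le_antisymm (Submodule.map_mono le_top) ?_
  rw [Submodule.map_top, hrange, Submodule.map_iSup]
  exact iSup_mono hmap

theorem exists_mulVec_graph_eq_and_iSup_eigenspace_eq_top {ι ι' : Type*} [Fintype ι] [DecidableEq ι]
    [Fintype ι'] [DecidableEq ι'] {A₁ A₂ : Matrix (ι ⊕ ι') (ι ⊕ ι') K} (hA₂ : IsUnit A₂)
    (T : Matrix ι' ι K) (c : κ → K)
    (hgraph : (Set.range fun x : ι → K => Sum.elim x (T *ᵥ x)) =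
      ↑(⨆ i, Module.End.eigenspace (toLin' (A₂⁻¹ * A₁)) (c i))) :
    ∃ D : Matrix ι ι K,
      (∀ x, A₁ *ᵥ Sum.elim x (T *ᵥ x) = A₂ *ᵥ Sum.elim (D *ᵥ x) (T *ᵥ D *ᵥ x)) ∧
      ⨆ i, Module.End.eigenspace (toLin' D) (c i) = ⊤ := by
  let γ : (ι → K) →ₗ[K] (ι ⊕ ι' → K) := (fromRows 1 T).mulVecLin
  have hγ : ∀ x, γ x = Sum.elim x (T *ᵥ x) := fun x => by
    rw [mulVecLin_apply, fromRows_mulVec, one_mulVec]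
  have hinj : Function.Injective γ := fun x y hxy => by
    simpa [hγ] using congrArg (· ∘ Sum.inl) hxy
  have hrange : LinearMap.range γ =
      ⨆ i, Module.End.eigenspace (toLin' (A₂⁻¹ * A₁)) (c i) :=
    SetLike.coe_injective (Eq.trans (congrArg Set.range (funext hγ)) hgraph)
  obtain ⟨f, hf, htop⟩ := exists_comp_eq_comp_and_iSup_eigenspace_eq_top hinj _ _ hrange
  obtain ⟨D, rfl⟩ : ∃ D, toLin' D = f := ⟨_, toLin'_toMatrix' f⟩
  refine ⟨D, fun x => ?_, htop⟩
  have h : Sum.elim (D *ᵥ x) (T *ᵥ D *ᵥ x) = (A₂⁻¹ * A₁) *ᵥ Sum.elim x (T *ᵥ x) := by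
    rw [← hγ, ← hγ]
    exact LinearMap.congr_fun hf x
  rw [h, mulVec_mulVec, mul_nonsing_inv_cancel_left _ _ ((isUnit_iff_isUnit_det _).1 hA₂)]

end Eigenspaces

section PosDef

variable {𝕜 ι : Type*} [RCLike 𝕜] [Fintype ι]

theorem posDef_of_re_dotProduct_mulVec_pos {A : Matrix ι ι 𝕜} (hA : A.IsHermitian)
    (h : ∀ x : ι → 𝕜, x ≠ 0 → 0 < RCLike.re (star x ⬝ᵥ A *ᵥ x)) : A.PosDef :=
  PosDef.of_dotProduct_mulVec_pos hA fun x hx =>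
    RCLike.pos_iff.2 ⟨h x hx, hA.im_star_dotProduct_mulVec_self x⟩

theorem star_star_dotProduct_mulVec (A : Matrix ι ι 𝕜) (x y : ι → 𝕜) :
    star (star x ⬝ᵥ A *ᵥ y) = star y ⬝ᵥ Aᴴ *ᵥ x := by
  rw [← star_dotProduct_star, star_star, star_mulVec, dotProduct_mulVec]

variable [DecidableEq ι]

theorem dotProduct_mulVec_eq_zero_of_mem_ker_sub_smul {A H : Matrix ι ι 𝕜} (hA : A.IsHermitian)
    (hH : H.IsHermitian) {c d : ℝ} (hcd : c ≠ d) {v w : ι → 𝕜}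
    (hv : v ∈ LinearMap.ker (toLin' (A - (c : 𝕜) • H)))
    (hw : w ∈ LinearMap.ker (toLin' (A - (d : 𝕜) • H))) : star v ⬝ᵥ H *ᵥ w = 0 := by
  rw [LinearMap.mem_ker, toLin'_apply, sub_mulVec, smul_mulVec, sub_eq_zero] at hv hw
  have hc : star v ⬝ᵥ A *ᵥ w = (c : 𝕜) * (star v ⬝ᵥ H *ᵥ w) := by
    have h := star_star_dotProduct_mulVec A w v
    rw [hA.eq, hv, dotProduct_smul, smul_eq_mul, star_mul', star_star_dotProduct_mulVec, hH.eq,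
      RCLike.star_def, RCLike.conj_ofReal] at h
    exact h.symm
  have hd : star v ⬝ᵥ A *ᵥ w = (d : 𝕜) * (star v ⬝ᵥ H *ᵥ w) := by
    rw [hw, dotProduct_smul, smul_eq_mul]
  have hmul : ((c : 𝕜) - d) * (star v ⬝ᵥ H *ᵥ w) = 0 := by rw [sub_mul, ← hc, hd, sub_self]
  exact (mul_eq_zero.1 hmul).resolve_left (sub_ne_zero.2 (mod_cast hcd))

theorem posDef_of_iSup_ker_sub_smul_eq_top {A H : Matrix ι ι 𝕜} (hA : A.IsHermitian)
    (hH : H.PosDef)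
    (htop : ⨆ c : Set.Ioi (0 : ℝ), LinearMap.ker (toLin' (A - ((c : ℝ) : 𝕜) • H)) = ⊤) :
    A.PosDef := by
  refine posDef_of_re_dotProduct_mulVec_pos hA fun x hx => ?_
  obtain ⟨v, hv, rfl⟩ := (Submodule.mem_iSup_iff_exists_finsupp _ x).1 (htop ▸ Submodule.mem_top)
  rw [Finsupp.sum] at hx ⊢
  have hAv : ∀ c, A *ᵥ v c = ((c : ℝ) : 𝕜) • H *ᵥ v c := fun c => by
    have h := hv c
    rwa [LinearMap.mem_ker, toLin'_apply, sub_mulVec, smul_mulVec, sub_eq_zero] at h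
  have hdiag : star (∑ c ∈ v.support, v c) ⬝ᵥ A *ᵥ (∑ c ∈ v.support, v c) =
      ∑ c ∈ v.support, ((c : ℝ) : 𝕜) * (star (v c) ⬝ᵥ H *ᵥ v c) := by
    rw [star_sum, sum_dotProduct, mulVec_sum]
    refine Finset.sum_congr rfl fun c hc => ?_
    rw [dotProduct_sum, Finset.sum_eq_single_of_mem c hc, hAv, dotProduct_smul, smul_eq_mul]
    intro d _ hdc
    rw [hAv, dotProduct_smul, dotProduct_mulVec_eq_zero_of_mem_ker_sub_smul hA hH.isHermitian
      (Subtype.coe_injective.ne hdc.symm) (hv c) (hv d), smul_zero]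
  have hpos : ∀ c ∈ v.support, 0 < RCLike.re (((c : ℝ) : 𝕜) * (star (v c) ⬝ᵥ H *ᵥ v c)) :=
    fun c hc => by
      rw [RCLike.re_ofReal_mul]
      exact mul_pos c.2 (hH.re_dotProduct_pos (Finsupp.mem_support_iff.1 hc))
  rw [hdiag, map_sum]
  refine Finset.sum_pos hpos (Finset.nonempty_of_ne_empty fun h => hx ?_)
  rw [h, Finset.sum_empty]

theorem posDef_inv_sub_inv {A B : Matrix ι ι 𝕜} (hA : A.PosDef) (hBA : (B - A).PosDef) :
    (A⁻¹ - B⁻¹).PosDef := by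
  have hB : B.PosDef := by simpa using hBA.add hA
  have hunitA := (isUnit_iff_isUnit_det _).1 hA.isUnit
  have hunitB := (isUnit_iff_isUnit_det _).1 hB.isUnit
  have hunitΔ := (isUnit_iff_isUnit_det _).1 hBA.isUnit
  have hsum : (A + A * (B - A)⁻¹ * A).PosDef := by
    have h := hBA.inv.conjTranspose_mul_mul_same (B := A)
      (mulVec_injective_iff_isUnit.2 hA.isUnit)
    rw [hA.isHermitian.eq] at h
    exact hA.add h
  have hinv : A⁻¹ - B⁻¹ = (A + A * (B - A)⁻¹ * A)⁻¹ := by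
    refine (inv_eq_right_inv ?_).symm
    have hfactor : A + A * (B - A)⁻¹ * A = B * (B - A)⁻¹ * A := by
      have h : (B - A) * (B - A)⁻¹ = 1 := mul_nonsing_inv _ hunitΔ
      calc A + A * (B - A)⁻¹ * A = ((B - A) * (B - A)⁻¹ + A * (B - A)⁻¹) * A := by
            rw [h, add_mul, one_mul]
        _ = B * (B - A)⁻¹ * A := by rw [← add_mul, sub_add_cancel]
    rw [hfactor, inv_sub_inv (iff_of_true hA.isUnit hB.isUnit)]
    calc B * (B - A)⁻¹ * A * (A⁻¹ * (B - A) * B⁻¹)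
        = B * ((B - A)⁻¹ * (A * A⁻¹) * (B - A)) * B⁻¹ := by simp only [mul_assoc]
      _ = 1 := by
        rw [mul_nonsing_inv _ hunitA, mul_one, nonsing_inv_mul _ hunitΔ, mul_one,
          mul_nonsing_inv _ hunitB]
  exact hinv ▸ hsum.inv

theorem posDef_of_eq_mul_of_iSup_eigenspace_eq_top {G₁ G₂ D : Matrix ι ι 𝕜}
    (hG₁ : G₁.IsHermitian) (hlt : (G₂ - G₁).PosDef) (hD : G₁ = G₂ * D)
    (htop : ⨆ μ : Set.Ioo (0 : ℝ) 1, Module.End.eigenspace (toLin' D) ((μ : ℝ) : 𝕜) = ⊤) :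
    G₁.PosDef := by
  -- `G₁ v = μ G₂ v` is equivalent to `G₁ v = μ / (1 - μ) (G₂ - G₁) v`.
  have hle : ∀ μ : Set.Ioo (0 : ℝ) 1, Module.End.eigenspace (toLin' D) ((μ : ℝ) : 𝕜) ≤
      LinearMap.ker (toLin' (G₁ - ((μ / (1 - μ) : ℝ) : 𝕜) • (G₂ - G₁))) := fun μ v hv => by
    have hv : G₁ *ᵥ v = ((μ : ℝ) : 𝕜) • G₂ *ᵥ v := by
      rw [hD, ← mulVec_mulVec, ← mulVec_smul]
      exact congrArg _ (Module.End.mem_eigenspace_iff.1 hv)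
    have hμ : (1 - (μ : ℝ) : 𝕜) ≠ 0 := sub_ne_zero.2 (mod_cast μ.2.2.ne')
    rw [LinearMap.mem_ker, toLin'_apply, sub_mulVec, smul_mulVec, sub_mulVec, hv]
    rw [RCLike.ofReal_div, RCLike.ofReal_sub, RCLike.ofReal_one]
    generalize ((μ : ℝ) : 𝕜) = c at hμ ⊢
    calc c • G₂ *ᵥ v - (c / (1 - c)) • (G₂ *ᵥ v - c • G₂ *ᵥ v)
        = (c - c / (1 - c) * (1 - c)) • G₂ *ᵥ v := by module
      _ = 0 := by rw [div_mul_cancel₀ _ hμ, sub_self, zero_smul]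
  refine posDef_of_iSup_ker_sub_smul_eq_top hG₁ hlt (top_unique (htop ▸ iSup_le fun μ => ?_))
  exact (hle μ).trans (le_iSup_of_le ⟨_, div_pos μ.2.1 (sub_pos.2 μ.2.2)⟩ le_rfl)

theorem inv_mul_conjTranspose_eq_of_eq_mul {B₁ B₂ G₁ G₂ D : Matrix ι ι 𝕜}
    (hG₁ : G₁.PosDef) (hG₂ : G₂.PosDef) (hG : G₁ = G₂ * D) (hB : B₁ = B₂ * D) :
    G₁⁻¹ * B₁ᴴ = G₂⁻¹ * B₂ᴴ := by
  have hD : D * G₁⁻¹ = G₂⁻¹ := by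
    have h : G₂ * (D * G₁⁻¹) = 1 := by
      rw [← mul_assoc, ← hG, mul_nonsing_inv _ ((isUnit_iff_isUnit_det _).1 hG₁.isUnit)]
    exact (inv_eq_right_inv h).symm
  have h : B₁ * G₁⁻¹ = B₂ * G₂⁻¹ := by rw [hB, mul_assoc, hD]
  simpa only [conjTranspose_mul, hG₁.1.inv.eq, hG₂.1.inv.eq] using congrArg conjTranspose h

end PosDef

section Weight

variable {n : ℕ} {L P L₁ P₁ L₂ P₂ L₃ P₃ : Matrix (Fin n) (Fin n) ℂ}

/-- The upper left block of `-𝐀_Φ`, namely the matrix `B` such that `𝐀_Φ (x, 0)` has first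
component `-B x`. -/
def schurFactor (L P : Matrix (Fin n) (Fin n) ℂ) : Matrix (Fin n) (Fin n) ℂ := Lᵀ⁻¹ * P

/-- The Schur complement of `Lᵀ` in the matrix of the polarised weight: the matrix `G` such that
`𝐀_Φ (x, 0)` has second component `i G x`. -/
def schurCompl (L P : Matrix (Fin n) (Fin n) ℂ) : Matrix (Fin n) (Fin n) ℂ := L - Pᴴ * Lᵀ⁻¹ * P

/-- The gradient `ζ` of the weight for the real inner product `Re x̄·y`, so that
`2 Φ(x) = Re x̄·ζ(x)`. -/
def weightGrad (L P : Matrix (Fin n) (Fin n) ℂ) : (Fin n → ℂ) →ₗ[ℝ] (Fin n → ℂ) where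
  toFun x := L *ᵥ x + Pᴴ *ᵥ star x
  map_add' x y := by simp only [mulVec_add, star_add]; abel
  map_smul' r x := by simp [mulVec_smul]

theorem weight_eq_re (L P : Matrix (Fin n) (Fin n) ℂ) (x : Fin n → ℂ) :
    weight L P x = (1 / 2) * ((star x ⬝ᵥ L *ᵥ x).re + (x ⬝ᵥ P *ᵥ x).re) := by
  rw [dotProduct_comm, dotProduct_comm x]
  rfl

theorem two_mul_weight (L P : Matrix (Fin n) (Fin n) ℂ) (x : Fin n → ℂ) :
    2 * weight L P x = (star x ⬝ᵥ weightGrad L P x).re := by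
  have hconj : star x ⬝ᵥ Pᴴ *ᵥ star x = star (x ⬝ᵥ P *ᵥ x) := by
    simpa using (star_star_dotProduct_mulVec P (star x) x).symm
  have hgrad : weightGrad L P x = L *ᵥ x + Pᴴ *ᵥ star x := rfl
  rw [weight_eq_re, hgrad, dotProduct_add, hconj, Complex.add_re]
  simp

theorem re_star_dotProduct_weightGrad_comm (hL : L.IsHermitian) (hP : P.IsSymm)
    (x y : Fin n → ℂ) :
    (star y ⬝ᵥ weightGrad L P x).re = (star x ⬝ᵥ weightGrad L P y).re := by
  have hLxy : star y ⬝ᵥ L *ᵥ x = star (star x ⬝ᵥ L *ᵥ y) := by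
    rw [star_star_dotProduct_mulVec, hL.eq]
  have hPxy : star y ⬝ᵥ Pᴴ *ᵥ star x = star x ⬝ᵥ Pᴴ *ᵥ star y := by
    rw [← dotProduct_transpose_mulVec, hP.conjTranspose.eq]
  change (star y ⬝ᵥ (L *ᵥ x + Pᴴ *ᵥ star x)).re = (star x ⬝ᵥ (L *ᵥ y + Pᴴ *ᵥ star y)).re
  rw [dotProduct_add, dotProduct_add, hLxy, hPxy]
  simp

theorem weight_add (hL : L.IsHermitian) (hP : P.IsSymm) (x y : Fin n → ℂ) :
    weight L P (x + y) = weight L P x + weight L P y + (star y ⬝ᵥ weightGrad L P x).re := by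
  have hcomm := re_star_dotProduct_weightGrad_comm hL hP x y
  have h := two_mul_weight L P (x + y)
  rw [map_add, star_add, dotProduct_add, add_dotProduct, add_dotProduct, Complex.add_re,
    Complex.add_re, Complex.add_re, ← two_mul_weight, ← two_mul_weight] at h
  linarith

theorem weight_smul (L P : Matrix (Fin n) (Fin n) ℂ) (t : ℝ) (x : Fin n → ℂ) :
    weight L P (t • x) = t ^ 2 * weight L P x := by
  have h := two_mul_weight L P (t • x)
  rw [map_smul, star_smul, smul_dotProduct, dotProduct_smul, smul_smul, Complex.smul_re,
    ← two_mul_weight, smul_eq_mul, star_trivial] at h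
  linarith

theorem weight_sub (hL : L.IsHermitian) (hP : P.IsSymm) (x y : Fin n → ℂ) :
    weight L P (x - y) = weight L P x + weight L P y - (star y ⬝ᵥ weightGrad L P x).re := by
  have hneg : weight L P (-y) = weight L P y := by simpa using weight_smul L P (-1) y
  rw [sub_eq_add_neg, weight_add hL hP, hneg, star_neg, neg_dotProduct, Complex.neg_re,
    ← sub_eq_add_neg]

@[fun_prop]
theorem continuous_weight (L P : Matrix (Fin n) (Fin n) ℂ) : Continuous (weight L P) := by
  unfold weight dotC
  fun_prop

theorem weight_circle_smul (L : Matrix (Fin n) (Fin n) ℂ) (c : Circle) (x : Fin n → ℂ) :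
    weight L 0 ((c : ℂ) • x) = weight L 0 x := by
  have hc : star (c : ℂ) * c = 1 := by simp [Complex.conj_mul', Circle.norm_coe]
  rw [weight_eq_re, weight_eq_re, star_smul, mulVec_smul, smul_dotProduct, dotProduct_smul,
    smul_smul, hc, one_smul, zero_mulVec, zero_mulVec, dotProduct_zero, dotProduct_zero]

/-- Completing the square: `x - k` and `k` are the stationary points of the two summands under the
constraint that they add up to `x`. -/
theorem weight_sub_add_weight (hL₂ : L₂.IsHermitian) (hP₂ : P₂.IsSymm) (hL₃ : L₃.IsHermitian)
    (hP₃ : P₃.IsSymm) {x k : Fin n → ℂ} (h₂ : weightGrad L₂ P₂ (x - k) = weightGrad L₁ P₁ x)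
    (h₃ : weightGrad L₃ P₃ k = weightGrad L₁ P₁ x) (w : Fin n → ℂ) :
    weight L₂ P₂ (x - w) + weight L₃ P₃ w =
      weight L₁ P₁ x + (weight L₂ P₂ (w - k) + weight L₃ P₃ (w - k)) := by
  obtain ⟨u, rfl⟩ : ∃ u, w = k + u := ⟨w - k, by abel⟩
  have hx : 2 * weight L₂ P₂ (x - k) + 2 * weight L₃ P₃ k = 2 * weight L₁ P₁ x := by
    rw [two_mul_weight, two_mul_weight, two_mul_weight, h₂, h₃, ← Complex.add_re,
      ← add_dotProduct, ← star_add, sub_add_cancel]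
  rw [← sub_sub, weight_sub hL₂ hP₂, weight_add hL₃ hP₃, h₂, h₃, add_sub_cancel_left]
  linarith

theorem isHermitian_schurCompl (hL : L.IsHermitian) : (schurCompl L P).IsHermitian :=
  hL.sub (isHermitian_conjTranspose_mul_mul P hL.transpose.inv)

/-- The left-hand side is the polarisation of `4 Φ`, with `z` in the role of the conjugate variable
`v̄`. -/
theorem weight_add_star_add_weight_I_smul_sub_star (hP : P.IsSymm) (v z : Fin n → ℂ) :
    weight L P (v + star z) + weight L P (Complex.I • (v - star z)) =
      (star (Sum.elim v z) ⬝ᵥ fromBlocks L Pᴴ P Lᵀ *ᵥ Sum.elim v z).re := by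
  have hzv : star v ⬝ᵥ Pᴴ *ᵥ z = star (star z ⬝ᵥ P *ᵥ v) :=
    (star_star_dotProduct_mulVec P z v).symm
  have hLz : z ⬝ᵥ L *ᵥ star z = star z ⬝ᵥ Lᵀ *ᵥ z := (dotProduct_transpose_mulVec _ _ _).symm
  have hPvz : v ⬝ᵥ P *ᵥ star z = star z ⬝ᵥ P *ᵥ v := by
    rw [← dotProduct_transpose_mulVec, hP.eq]
  rw [fromBlocks_mulVec, Function.star_sumElim, sumElim_dotProduct_sumElim]
  simp only [weight_eq_re, mulVec_add, mulVec_sub, mulVec_smul, star_add, star_sub, star_smul,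
    star_star, dotProduct_add, add_dotProduct, dotProduct_sub, sub_dotProduct, smul_dotProduct,
    dotProduct_smul, hLz, hPvz, hzv, Sum.elim_comp_inl, Sum.elim_comp_inr, smul_eq_mul,
    RCLike.star_def, Complex.add_re, Complex.sub_re, Complex.sub_im,
    Complex.mul_re, Complex.mul_im, Complex.I_re, Complex.I_im, Complex.conj_re, Complex.conj_I,
    Complex.neg_re, Complex.neg_im]
  ring

theorem star_dotProduct_fromBlocks_mulVec (hL : L.PosDef) (v z : Fin n → ℂ) :
    star (Sum.elim v z) ⬝ᵥ fromBlocks L Pᴴ P Lᵀ *ᵥ Sum.elim v z =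
      star (schurFactor L P *ᵥ v + z) ⬝ᵥ Lᵀ *ᵥ (schurFactor L P *ᵥ v + z) +
        star v ⬝ᵥ schurCompl L P *ᵥ v := by
  let _ : Invertible Lᵀ := hL.transpose.isUnit.invertible
  simpa only [schurFactor, schurCompl, conjTranspose_conjTranspose, ← dotProduct_mulVec] using
    schur_complement_eq₂₂ L Pᴴ v z hL.transpose.isHermitian

theorem weight_pos (hL : L.PosDef) (hP : P.IsSymm) (hG : (schurCompl L P).PosDef)
    {x : Fin n → ℂ} (hx : x ≠ 0) : 0 < weight L P x := by
  have hdouble : weight L P (x + star (star x)) + weight L P (Complex.I • (x - star (star x))) =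
      2 ^ 2 * weight L P x := by
    rw [star_star, sub_self, smul_zero, ← two_smul ℝ x, weight_smul]
    simp [weight_eq_re]
  rw [weight_add_star_add_weight_I_smul_sub_star hP, star_dotProduct_fromBlocks_mulVec hL,
    Complex.add_re] at hdouble
  have hLnonneg := hL.transpose.posSemidef.re_dotProduct_nonneg (schurFactor L P *ᵥ x + star x)
  have hGpos := hG.re_dotProduct_pos hx
  simp only [RCLike.re_eq_complex_re] at hLnonneg hGpos
  linarith

theorem posDef_fromBlocks_sub_fromBlocks (hL₁ : L₁.IsHermitian) (hL₂ : L₂.IsHermitian)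
    (hP₁ : P₁.IsSymm) (hP₂ : P₂.IsSymm) (hlt : ∀ x, x ≠ 0 → weight L₁ P₁ x < weight L₂ P₂ x) :
    (fromBlocks L₂ P₂ᴴ P₂ L₂ᵀ - fromBlocks L₁ P₁ᴴ P₁ L₁ᵀ).PosDef := by
  have hherm : ∀ {L P : Matrix (Fin n) (Fin n) ℂ}, L.IsHermitian →
      (fromBlocks L Pᴴ P Lᵀ).IsHermitian := fun hL =>
    hL.fromBlocks (conjTranspose_conjTranspose _) hL.transpose
  have hle : ∀ x, weight L₁ P₁ x ≤ weight L₂ P₂ x := fun x => by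
    obtain rfl | hx := eq_or_ne x 0
    · simp [weight_eq_re]
    · exact (hlt x hx).le
  refine posDef_of_re_dotProduct_mulVec_pos ((hherm hL₂).sub (hherm hL₁)) fun x hx => ?_
  obtain ⟨v, z, rfl⟩ : ∃ v z, x = Sum.elim v z := ⟨_, _, (Sum.elim_comp_inl_inr x).symm⟩
  rw [sub_mulVec, dotProduct_sub, map_sub, RCLike.re_eq_complex_re,
    ← weight_add_star_add_weight_I_smul_sub_star hP₁,
    ← weight_add_star_add_weight_I_smul_sub_star hP₂, sub_pos]
  obtain hadd | hadd := ne_or_eq (v + star z) 0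
  · exact add_lt_add_of_lt_of_le (hlt _ hadd) (hle _)
  · refine add_lt_add_of_le_of_lt (hle _) (hlt _ (smul_ne_zero Complex.I_ne_zero fun hsub => hx ?_))
    have hv : v = 0 := by
      rw [← sub_eq_zero.1 hsub, ← two_smul ℂ v] at hadd
      exact (smul_eq_zero.1 hadd).resolve_left two_ne_zero
    have hz : z = 0 := by simpa [hv] using hadd
    rw [hv, hz, Sum.elim_zero_zero]

theorem posDef_schurCompl_sub_schurCompl (hL₁ : L₁.PosDef) (hL₂ : L₂.PosDef) (hP₁ : P₁.IsSymm)
    (hP₂ : P₂.IsSymm) (hlt : ∀ x, x ≠ 0 → weight L₁ P₁ x < weight L₂ P₂ x) :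
    (schurCompl L₂ P₂ - schurCompl L₁ P₁).PosDef := by
  refine posDef_of_re_dotProduct_mulVec_pos
    ((isHermitian_schurCompl hL₂.1).sub (isHermitian_schurCompl hL₁.1)) fun v hv => ?_
  have hpolar := (posDef_fromBlocks_sub_fromBlocks hL₁.1 hL₂.1 hP₁ hP₂ hlt).re_dotProduct_pos
    (x := Sum.elim v (-(schurFactor L₂ P₂ *ᵥ v))) fun h => hv (congrArg (· ∘ Sum.inl) h)
  have hnonneg := hL₁.transpose.posSemidef.re_dotProduct_nonneg
    (schurFactor L₁ P₁ *ᵥ v + -(schurFactor L₂ P₂ *ᵥ v))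
  rw [sub_mulVec, dotProduct_sub, star_dotProduct_fromBlocks_mulVec hL₁,
    star_dotProduct_fromBlocks_mulVec hL₂, add_neg_cancel, mulVec_zero, dotProduct_zero, zero_add,
    map_sub, map_add] at hpolar
  rw [sub_mulVec, dotProduct_sub, map_sub]
  linarith

theorem star_weightGrad (hL : L.IsHermitian) (hP : P.IsSymm) (x : Fin n → ℂ) :
    star (weightGrad L P x) = Lᵀ *ᵥ star x + P *ᵥ x := by
  change star (L *ᵥ x + Pᴴ *ᵥ star x) = _
  rw [star_add, star_mulVec, star_mulVec, hL.eq, conjTranspose_conjTranspose, star_star,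
    ← mulVec_transpose, ← mulVec_transpose, hP.eq]

/-- Eliminating `x̄` from `ζ = L x + P̄ x̄` and its conjugate. -/
theorem schurCompl_mulVec (hL : L.PosDef) (hP : P.IsSymm) (x : Fin n → ℂ) :
    schurCompl L P *ᵥ x =
      weightGrad L P x - (schurFactor L P)ᴴ *ᵥ star (weightGrad L P x) := by
  have hdet : IsUnit Lᵀ.det := (isUnit_iff_isUnit_det _).1 hL.transpose.isUnit
  have hB : (schurFactor L P)ᴴ = Pᴴ * Lᵀ⁻¹ := by
    rw [schurFactor, conjTranspose_mul, hL.1.transpose.inv.eq]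
  rw [star_weightGrad hL.1 hP, hB, mulVec_add, mulVec_mulVec, mulVec_mulVec, mul_assoc,
    nonsing_inv_mul _ hdet, mul_one, schurCompl, sub_mulVec, add_comm (Pᴴ *ᵥ star x)]
  exact (add_sub_add_right_eq_sub _ _ _).symm

theorem eq_inv_schurCompl_mulVec (hL : L.PosDef) (hP : P.IsSymm) (hG : (schurCompl L P).PosDef)
    (x : Fin n → ℂ) :
    x = (schurCompl L P)⁻¹ *ᵥ weightGrad L P x -
      ((schurCompl L P)⁻¹ * (schurFactor L P)ᴴ) *ᵥ star (weightGrad L P x) := by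
  rw [← mulVec_mulVec, ← mulVec_sub, ← schurCompl_mulVec hL hP, mulVec_mulVec,
    nonsing_inv_mul _ ((isUnit_iff_isUnit_det _).1 hG.isUnit), one_mulVec]

theorem weightGrad_surjective (hL : L.PosDef) (hP : P.IsSymm) (hG : (schurCompl L P).PosDef) :
    Function.Surjective (weightGrad L P) := by
  refine LinearMap.injective_iff_surjective.1 fun x y hxy => ?_
  rw [eq_inv_schurCompl_mulVec hL hP hG x, hxy, ← eq_inv_schurCompl_mulVec hL hP hG y]

/-- The difference of the covariances `G⁻¹` is the only obstruction to `ζ₁` and `ζ₂` being inverted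
by the same formula. -/
theorem weightGrad_sub_inv_sub_inv_mulVec (hL₁ : L₁.PosDef) (hL₂ : L₂.PosDef) (hP₁ : P₁.IsSymm)
    (hP₂ : P₂.IsSymm) (hG₁ : (schurCompl L₁ P₁).PosDef) (hG₂ : (schurCompl L₂ P₂).PosDef)
    (hpseudo : (schurCompl L₁ P₁)⁻¹ * (schurFactor L₁ P₁)ᴴ =
      (schurCompl L₂ P₂)⁻¹ * (schurFactor L₂ P₂)ᴴ) (x : Fin n → ℂ) :
    weightGrad L₂ P₂
        (x - ((schurCompl L₁ P₁)⁻¹ - (schurCompl L₂ P₂)⁻¹) *ᵥ weightGrad L₁ P₁ x) =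
      weightGrad L₁ P₁ x := by
  obtain ⟨y, hy⟩ := weightGrad_surjective hL₂ hP₂ hG₂ (weightGrad L₁ P₁ x)
  have hxy : x - ((schurCompl L₁ P₁)⁻¹ - (schurCompl L₂ P₂)⁻¹) *ᵥ weightGrad L₁ P₁ x = y := by
    have hx := eq_inv_schurCompl_mulVec hL₁ hP₁ hG₁ x
    rw [eq_inv_schurCompl_mulVec hL₂ hP₂ hG₂ y, hy, ← hpseudo, sub_mulVec]
    nth_rewrite 1 [hx]
    abel
  rw [hxy, hy]

end Weight

section PhaseSpace

variable {n : ℕ} {L P T L₁ P₁ L₂ P₂ : Matrix (Fin n) (Fin n) ℂ}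

theorem conjM_mul {m : Type*} [Fintype m] (A B : Matrix m m ℂ) :
    conjM (A * B) = conjM A * conjM B := Matrix.map_mul

theorem conjM_inv_of_isHermitian (hL : L.IsHermitian) : conjM L⁻¹ = Lᵀ⁻¹ := by
  have h : conjM L⁻¹ = (L⁻¹)ᴴᵀ := (transpose_transpose _).symm
  rw [h, hL.inv.eq, transpose_nonsing_inv]

theorem conjM_of_isSymm (hP : P.IsSymm) : conjM P = Pᴴ := by
  rw [conjTranspose, hP.eq]
  rfl

theorem isUnit_Amat (hL : IsUnit L) (P : Matrix (Fin n) (Fin n) ℂ) : IsUnit (Amat L P) := by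
  have hK : IsUnit (conjM L⁻¹) :=
    ((isUnit_nonsing_inv_iff).2 hL).map (starRingEnd ℂ).mapMatrix
  refine mulVec_injective_iff_isUnit.1 ((injective_iff_map_eq_zero (Amat L P).mulVecLin).2 ?_)
  intro X hX
  obtain ⟨x, ξ, rfl⟩ : ∃ x ξ, X = Sum.elim x ξ := ⟨_, _, (Sum.elim_comp_inl_inr X).symm⟩
  rw [mulVecLin_apply, Amat, fromBlocks_mulVec, conjM_mul, ← Sum.elim_zero_zero] at hX
  have hfst := congrArg (· ∘ Sum.inl) hX
  have hsnd := congrArg (· ∘ Sum.inr) hX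
  simp only [Sum.elim_comp_inl, Sum.elim_comp_inr] at hfst hsnd
  have hrow : Complex.I • L *ᵥ x = 0 := by
    have h : (Complex.I • (L - conjM P * conjM L⁻¹ * P)) *ᵥ x + -(conjM P * conjM L⁻¹) *ᵥ ξ =
        Complex.I • L *ᵥ x + Complex.I • conjM P *ᵥ
          (-(conjM L⁻¹ * P) *ᵥ x + (Complex.I • conjM L⁻¹) *ᵥ ξ) := by
      simp only [neg_mulVec, smul_mulVec, sub_mulVec, mulVec_add, mulVec_neg, mulVec_smul,
        smul_add, smul_sub, smul_neg, smul_smul, Complex.I_mul_I, neg_smul, one_smul, mulVec_mulVec,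
        mul_assoc]
      abel
    rwa [hsnd, hfst, mulVec_zero, smul_zero, add_zero, eq_comm] at h
  have hx : x = 0 := by
    refine mulVec_injective_of_isUnit hL ?_
    rw [mulVec_zero]
    exact (smul_eq_zero.1 hrow).resolve_left Complex.I_ne_zero
  have hξ : ξ = 0 := by
    refine mulVec_injective_of_isUnit hK ?_
    rw [hx, mulVec_zero, zero_add, smul_mulVec] at hfst
    rw [mulVec_zero]
    exact (smul_eq_zero.1 hfst).resolve_left Complex.I_ne_zero
  rw [hx, hξ, Sum.elim_zero_zero]

theorem Amat_mulVec_graph (hL : L.IsHermitian) (hP : P.IsSymm) (T : Matrix (Fin n) (Fin n) ℂ)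
    (x : Fin n → ℂ) :
    Amat L P *ᵥ Sum.elim x (T *ᵥ x) =
      Sum.elim (-(schurFactor L (P - Complex.I • T) *ᵥ x))
        (Complex.I • (schurCompl L (P - Complex.I • T) *ᵥ x) -
          Tᴴ *ᵥ (schurFactor L (P - Complex.I • T) *ᵥ x)) := by
  rw [Amat, fromBlocks_mulVec, conjM_mul, conjM_inv_of_isHermitian hL, conjM_of_isSymm hP]
  congr 1
  · simp only [Sum.elim_comp_inl, Sum.elim_comp_inr, schurFactor, mul_sub, sub_mulVec,
      mul_smul_comm, smul_mul_assoc, smul_mulVec, neg_mulVec, mulVec_mulVec]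
    abel
  · simp only [Sum.elim_comp_inl, Sum.elim_comp_inr, schurCompl, schurFactor, conjTranspose_sub,
      conjTranspose_smul, mul_sub, sub_mul, sub_mulVec, smul_mulVec, mulVec_smul, mulVec_sub,
      mulVec_mulVec, smul_mul_assoc, mul_smul_comm, smul_sub, smul_smul, mul_assoc]
    simp only [RCLike.star_def, Complex.conj_I, mul_neg, neg_smul, neg_mul,
      Complex.I_mul_I, mul_one, one_smul, neg_neg, neg_mulVec, mul_assoc]
    abel

theorem exists_mul_eq_and_iSup_eigenspace_eq_top (hL₁ : L₁.IsHermitian) (hL₂ : L₂.PosDef)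
    (hP₁ : P₁.IsSymm) (hP₂ : P₂.IsSymm)
    (hgraph : (Set.range fun x : Fin n → ℂ => Sum.elim x (T *ᵥ x)) =
      ↑(⨆ μ ∈ Set.Ioo (0 : ℝ) 1,
        Module.End.eigenspace (toLin' ((Amat L₂ P₂)⁻¹ * Amat L₁ P₁)) (μ : ℂ))) :
    ∃ D : Matrix (Fin n) (Fin n) ℂ,
      schurFactor L₁ (P₁ - Complex.I • T) = schurFactor L₂ (P₂ - Complex.I • T) * D ∧
      schurCompl L₁ (P₁ - Complex.I • T) = schurCompl L₂ (P₂ - Complex.I • T) * D ∧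
      ⨆ μ : Set.Ioo (0 : ℝ) 1, Module.End.eigenspace (toLin' D) ((μ : ℝ) : ℂ) = ⊤ := by
  rw [iSup_subtype'] at hgraph
  obtain ⟨D, hA, htop⟩ :=
    exists_mulVec_graph_eq_and_iSup_eigenspace_eq_top (isUnit_Amat hL₂.isUnit P₂) T _ hgraph
  simp only [Amat_mulVec_graph hL₁ hP₁, Amat_mulVec_graph hL₂.1 hP₂] at hA
  have hB : ∀ x, schurFactor L₁ (P₁ - Complex.I • T) *ᵥ x =
      schurFactor L₂ (P₂ - Complex.I • T) *ᵥ D *ᵥ x := fun x =>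
    neg_injective (congrArg (· ∘ Sum.inl) (hA x))
  have hG : ∀ x, schurCompl L₁ (P₁ - Complex.I • T) *ᵥ x =
      schurCompl L₂ (P₂ - Complex.I • T) *ᵥ D *ᵥ x := fun x => by
    have h := congrArg (· ∘ Sum.inr) (hA x)
    simp only [Sum.elim_comp_inr, hB, sub_left_inj] at h
    exact smul_right_injective _ Complex.I_ne_zero h
  exact ⟨D, ext_of_mulVec_single fun i => by rw [hB, mulVec_mulVec],
    ext_of_mulVec_single fun i => by rw [hG, mulVec_mulVec], htop⟩

end PhaseSpace

section ExpMeasure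

variable {E : Type*} [MeasureSpace E]

/-- The measure with density `e^{-q}`. The squared norm of `H_Φ` is the squared `L²` norm for
`expMeasure (4πΦ)`. -/
def expMeasure (q : E → ℝ) : Measure E := volume.withDensity fun x => ENNReal.ofReal (exp (-q x))

instance [SFinite (volume : Measure E)] (q : E → ℝ) : SFinite (expMeasure q) :=
  inferInstanceAs (SFinite (volume.withDensity _))

theorem expMeasure_univ (q : E → ℝ) :
    expMeasure q Set.univ = ∫⁻ x, ENNReal.ofReal (exp (-q x)) := by
  rw [expMeasure, withDensity_apply _ .univ, setLIntegral_univ]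

theorem expMeasure_univ_ne_zero [NeZero (volume : Measure E)] {q : E → ℝ} (hq : Measurable q) :
    expMeasure q Set.univ ≠ 0 := by
  rw [expMeasure_univ, Ne, lintegral_eq_zero_iff (by fun_prop)]
  intro h
  obtain ⟨x, hx⟩ := h.exists
  exact (ENNReal.ofReal_pos.2 (exp_pos _)).ne' hx

theorem smulInvariantMeasure_expMeasure {G : Type*} [SMul G E] [MeasurableConstSMul G E]
    [SMulInvariantMeasure G E volume] {q : E → ℝ} (hq : Measurable q)
    (hsmul : ∀ (c : G) x, q (c • x) = q x) : SMulInvariantMeasure G E (expMeasure q) where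
  measure_preimage_smul c s hs := by
    rw [expMeasure, withDensity_apply _ (hs.preimage (measurable_const_smul c)),
      withDensity_apply _ hs, ← (measurePreserving_smul c volume).setLIntegral_comp_preimage hs
        (by fun_prop)]
    simp only [hsmul]

theorem expMeasure_conv_expMeasure [AddCommGroup E] [MeasurableAdd₂ E] [MeasurableNeg E]
    [SFinite (volume : Measure E)] [(volume : Measure E).IsAddLeftInvariant]
    {q₁ q₂ q₃ r : E → ℝ} (hq₁ : Measurable q₁) (hq₂ : Measurable q₂) (hq₃ : Measurable q₃)
    (h : ∀ x, ∃ k, ∀ w, q₂ (x - w) + q₃ w = q₁ x + r (w - k)) :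
    expMeasure q₂ ∗ expMeasure q₃ = expMeasure r Set.univ • expMeasure q₁ := by
  rw [Measure.conv_comm, expMeasure, expMeasure,
    conv_withDensity_eq_lconvolution (by fun_prop) (by fun_prop)]
  rw [expMeasure.eq_def q₁, ← withDensity_smul _ (by fun_prop)]
  congr 1 with x
  obtain ⟨k, hk⟩ := h x
  rw [lconvolution_def]
  calc _ = ∫⁻ w, ENNReal.ofReal (exp (-q₁ x)) * ENNReal.ofReal (exp (-r (w - k))) := by
        refine lintegral_congr fun w => ?_
        rw [← ENNReal.ofReal_mul (exp_pos _).le, ← ENNReal.ofReal_mul (exp_pos _).le, ← exp_add,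
          ← exp_add, neg_add_eq_sub w x, ← neg_add, ← neg_add, add_comm, hk]
    _ = ENNReal.ofReal (exp (-q₁ x)) * expMeasure r Set.univ := by
        rw [lintegral_const_mul' _ _ ENNReal.ofReal_ne_top, expMeasure_univ,
          lintegral_sub_right_eq_self (fun w => ENNReal.ofReal (exp (-r w)))]
    _ = _ := mul_comm _ _

end ExpMeasure

section SubMeanValue

open Complex

variable {F : Type*} [NormedAddCommGroup F] [NormedSpace ℂ F] [CompleteSpace F]

theorem ofReal_two_pi_mul_enorm_le_lintegral_circle {g : ℂ → F} (hg : Differentiable ℂ g) :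
    ENNReal.ofReal (2 * π) * ‖g 0‖ₑ ≤
      ∫⁻ θ in Set.Ioc 0 (2 * π), ‖g (Circle.exp θ : ℂ)‖ₑ := by
  have hmean : Real.circleAverage g 0 1 = g 0 := hg.diffContOnCl.circleAverage
  rw [Real.circleAverage_def, intervalIntegral.integral_of_le two_pi_pos.le,
    inv_smul_eq_iff₀ two_pi_pos.ne'] at hmean
  calc ENNReal.ofReal (2 * π) * ‖g 0‖ₑ = ‖(2 * π) • g 0‖ₑ := by
        rw [enorm_smul, Real.enorm_of_nonneg two_pi_pos.le]
    _ ≤ ∫⁻ θ in Set.Ioc 0 (2 * π), ‖g (circleMap 0 1 θ)‖ₑ :=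
        hmean ▸ enorm_integral_le_lintegral_enorm _
    _ = ∫⁻ θ in Set.Ioc 0 (2 * π), ‖g (Circle.exp θ : ℂ)‖ₑ := by
        simp only [circleMap_zero, ofReal_one, one_mul, Circle.coe_exp]

variable {E : Type*} [NormedAddCommGroup E] [NormedSpace ℂ E] [MeasurableSpace E] [BorelSpace E]

theorem enorm_mul_measure_univ_le_lintegral_enorm_add {ν : Measure E} [SFinite ν]
    [SMulInvariantMeasure Circle E ν] {g : E → F} (hg : Differentiable ℂ g) (y : E) :
    ‖g y‖ₑ * ν Set.univ ≤ ∫⁻ w, ‖g (y + w)‖ₑ ∂ν := by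
  have hline : ∀ w, ENNReal.ofReal (2 * π) * ‖g y‖ₑ ≤
      ∫⁻ θ in Set.Ioc 0 (2 * π), ‖g (y + Circle.exp θ • w)‖ₑ := fun w => by
    simpa [Circle.smul_def] using ofReal_two_pi_mul_enorm_le_lintegral_circle
      (g := fun z => g (y + z • w)) (by fun_prop)
  have hcont := hg.continuous
  have hpi : ENNReal.ofReal (2 * π) ≠ 0 := (ENNReal.ofReal_pos.2 two_pi_pos).ne'
  refine (ENNReal.mul_le_mul_iff_right hpi ENNReal.ofReal_ne_top).1 ?_
  calc ENNReal.ofReal (2 * π) * (‖g y‖ₑ * ν Set.univ)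
      = ∫⁻ _, ENNReal.ofReal (2 * π) * ‖g y‖ₑ ∂ν := by rw [lintegral_const, mul_assoc]
    _ ≤ ∫⁻ w, (∫⁻ θ in Set.Ioc 0 (2 * π), ‖g (y + Circle.exp θ • w)‖ₑ) ∂ν := lintegral_mono hline
    _ = ∫⁻ θ in Set.Ioc 0 (2 * π), (∫⁻ w, ‖g (y + Circle.exp θ • w)‖ₑ ∂ν) :=
        lintegral_lintegral_swap (Continuous.measurable
          (f := fun p : E × ℝ => ‖g (y + Circle.exp p.2 • p.1)‖ₑ) (by fun_prop)).aemeasurable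
    _ = ∫⁻ _ in Set.Ioc 0 (2 * π), ∫⁻ w, ‖g (y + w)‖ₑ ∂ν := by
        refine lintegral_congr fun θ => ?_
        exact (measurePreserving_smul (Circle.exp θ) ν).lintegral_comp
          (f := fun w => ‖g (y + w)‖ₑ) (Continuous.measurable (by fun_prop))
    _ = ENNReal.ofReal (2 * π) * ∫⁻ w, ‖g (y + w)‖ₑ ∂ν := by
        rw [setLIntegral_const, volume_Ioc, sub_zero, mul_comm]

variable [SecondCountableTopology E]

theorem lintegral_enorm_mul_measure_univ_le_lintegral_conv (μ : Measure E) {ν : Measure E}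
    [SFinite ν] [SMulInvariantMeasure Circle E ν] {g : E → F} (hg : Differentiable ℂ g) :
    (∫⁻ x, ‖g x‖ₑ ∂μ) * ν Set.univ ≤ ∫⁻ x, ‖g x‖ₑ ∂(μ ∗ ν) := by
  have hmeas : Measurable fun x => ‖g x‖ₑ := hg.continuous.enorm.measurable
  rw [Measure.lintegral_conv hmeas, ← lintegral_mul_const _ hmeas]
  exact lintegral_mono fun y => enorm_mul_measure_univ_le_lintegral_enorm_add hg y

/-- With equality for constant `g`, so that constants maximise the ratio of the two integrals. -/
theorem lintegral_enorm_mul_measure_univ_le {μ₁ μ₂ ν : Measure E} [IsFiniteMeasure ν] [NeZero ν]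
    [SMulInvariantMeasure Circle E ν] {Z : ℝ≥0∞} (hconv : μ₂ ∗ ν = Z • μ₁) {g : E → F}
    (hg : Differentiable ℂ g) :
    (∫⁻ x, ‖g x‖ₑ ∂μ₂) * μ₁ Set.univ ≤ μ₂ Set.univ * ∫⁻ x, ‖g x‖ₑ ∂μ₁ := by
  have hmass : Z * μ₁ Set.univ = μ₂ Set.univ * ν Set.univ := by
    rw [← smul_eq_mul, ← Measure.smul_apply, ← hconv, ← lintegral_one,
      Measure.lintegral_conv measurable_const]
    simp only [lintegral_const, one_mul, mul_comm]
  have hg' := lintegral_enorm_mul_measure_univ_le_lintegral_conv μ₂ (ν := ν) hg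
  rw [hconv, lintegral_smul_measure, smul_eq_mul] at hg'
  have hν : ν Set.univ ≠ 0 := Measure.measure_univ_ne_zero.2 (NeZero.ne ν)
  refine (ENNReal.mul_le_mul_iff_left hν (measure_ne_top ν Set.univ)).1 ?_
  calc (∫⁻ x, ‖g x‖ₑ ∂μ₂) * μ₁ Set.univ * ν Set.univ
      = (∫⁻ x, ‖g x‖ₑ ∂μ₂) * ν Set.univ * μ₁ Set.univ := mul_right_comm _ _ _
    _ ≤ Z * (∫⁻ x, ‖g x‖ₑ ∂μ₁) * μ₁ Set.univ := by gcongr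
    _ = μ₂ Set.univ * (∫⁻ x, ‖g x‖ₑ ∂μ₁) * ν Set.univ := by
        rw [mul_right_comm, hmass, mul_right_comm]

end SubMeanValue

section QuadraticGrowth

variable {E : Type*} [NormedAddCommGroup E] [NormedSpace ℝ E] [FiniteDimensional ℝ E]

theorem exists_pos_forall_mul_norm_sq_le {q : E → ℝ} (hq : Continuous q)
    (hsmul : ∀ (t : ℝ) x, q (t • x) = t ^ 2 * q x) (hpos : ∀ x, x ≠ 0 → 0 < q x) :
    ∃ c > 0, ∀ x, c * ‖x‖ ^ 2 ≤ q x := by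
  have hzero : q 0 = 0 := by simpa using hsmul 0 0
  have hproper : ProperSpace E := FiniteDimensional.proper ℝ E
  obtain hE | hE := subsingleton_or_nontrivial E
  · exact ⟨1, one_pos, fun x => by simp [Subsingleton.elim x 0, hzero]⟩
  obtain ⟨u, hu, hmin⟩ := (isCompact_sphere (0 : E) 1).exists_isMinOn
    (NormedSpace.sphere_nonempty.2 zero_le_one) hq.continuousOn
  refine ⟨q u, hpos u (ne_zero_of_mem_unit_sphere ⟨u, hu⟩), fun x => ?_⟩
  obtain rfl | hx := eq_or_ne x 0
  · simp [hzero]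
  calc q u * ‖x‖ ^ 2 ≤ q (‖x‖⁻¹ • x) * ‖x‖ ^ 2 := by
        gcongr
        exact hmin (by simp [norm_smul, hx])
    _ = q x := by
        rw [hsmul]
        field_simp [norm_ne_zero_iff.2 hx]

theorem integrable_exp_neg_mul_norm_sq [MeasurableSpace E] [BorelSpace E] (μ : Measure E)
    [μ.IsAddHaarMeasure] {c : ℝ} (hc : 0 < c) : Integrable (fun x => exp (-c * ‖x‖ ^ 2)) μ := by
  obtain hE | hE := subsingleton_or_nontrivial E
  · exact .of_finite
  rw [integrable_fun_norm_addHaar μ (f := fun r => exp (-c * r ^ 2))]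
  have hdim : (-1 : ℝ) < (Module.finrank ℝ E - 1 : ℕ) :=
    neg_one_lt_zero.trans_le (Nat.cast_nonneg _)
  simpa only [rpow_natCast, smul_eq_mul] using integrableOn_rpow_mul_exp_neg_mul_sq hc hdim

theorem isFiniteMeasure_expMeasure [MeasureSpace E] [BorelSpace E]
    [(volume : Measure E).IsAddHaarMeasure] {q : E → ℝ} (hq : Continuous q)
    (hsmul : ∀ (t : ℝ) x, q (t • x) = t ^ 2 * q x) (hpos : ∀ x, x ≠ 0 → 0 < q x) :
    IsFiniteMeasure (expMeasure q) where
  measure_univ_lt_top := by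
    obtain ⟨c, hc, hle⟩ := exists_pos_forall_mul_norm_sq_le hq hsmul hpos
    rw [expMeasure_univ]
    refine (lintegral_mono fun x => ?_).trans_lt
      (integrable_exp_neg_mul_norm_sq volume hc).lintegral_lt_top
    exact ENNReal.ofReal_le_ofReal (exp_le_exp.2 (by linarith [hle x]))

end QuadraticGrowth

section Embedding

variable {n : ℕ} {L P L₁ P₁ L₂ P₂ : Matrix (Fin n) (Fin n) ℂ}

theorem smulInvariantMeasure_circle_pi {ι : Type*} [Fintype ι] :
    SMulInvariantMeasure Circle (ι → ℂ) volume where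
  measure_preimage_smul c _ hs :=
    (volume_preserving_pi fun _ => (rotation c).measurePreserving).measure_preimage
      hs.nullMeasurableSet

theorem HPhiNorm_div_HPhiNorm_eq_embedNorm {Φ₁ Φ₂ : (Fin n → ℂ) → ℝ} {g : (Fin n → ℂ) → ℂ}
    (hg : Differentiable ℂ g) (hpos : 0 < HPhiNorm Φ₁ g) (htop : HPhiNorm Φ₁ g ≠ ⊤)
    (hmax : ∀ f : (Fin n → ℂ) → ℂ, Differentiable ℂ f →
      HPhiNorm Φ₂ f * HPhiNorm Φ₁ g ≤ HPhiNorm Φ₂ g * HPhiNorm Φ₁ f) :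
    HPhiNorm Φ₂ g / HPhiNorm Φ₁ g = embedNorm Φ₁ Φ₂ := by
  refine le_antisymm ?_ (iSup_le fun ⟨f, hf, hfpos, hftop⟩ => ?_)
  · exact le_iSup (fun f : {f : (Fin n → ℂ) → ℂ // Differentiable ℂ f ∧
      0 < HPhiNorm Φ₁ f ∧ HPhiNorm Φ₁ f ≠ ⊤} => HPhiNorm Φ₂ f.1 / HPhiNorm Φ₁ f.1)
      ⟨g, hg, hpos, htop⟩
  · rw [ENNReal.div_le_iff hfpos.ne' hftop, ← ENNReal.mul_div_right_comm,
      ENNReal.le_div_iff_mul_le (.inl hpos.ne') (.inl htop)]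
    exact hmax f hf

/-- The measure `e^{-4πΦ} dL` defining the norm of `H_Φ`. -/
def weightMeasure (L P : Matrix (Fin n) (Fin n) ℂ) : Measure (Fin n → ℂ) :=
  expMeasure fun x => 4 * π * weight L P x

instance (L P : Matrix (Fin n) (Fin n) ℂ) : SFinite (weightMeasure L P) :=
  inferInstanceAs (SFinite (expMeasure _))

theorem HPhiNormSq_weight (L P : Matrix (Fin n) (Fin n) ℂ) (f : (Fin n → ℂ) → ℂ) :
    HPhiNormSq (weight L P) f = ∫⁻ x, ‖f x ^ 2‖ₑ ∂weightMeasure L P := by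
  rw [weightMeasure, expMeasure, lintegral_withDensity_eq_lintegral_mul_non_measurable _
    (by fun_prop) (.of_forall fun _ => ENNReal.ofReal_lt_top)]
  refine lintegral_congr fun x => ?_
  rw [Pi.mul_apply, ← ofReal_norm, norm_pow, ← ENNReal.ofReal_mul (exp_pos _).le, mul_comm,
    ← neg_mul, ← neg_mul]

theorem HPhiNormSq_weight_one (L P : Matrix (Fin n) (Fin n) ℂ) :
    HPhiNormSq (weight L P) 1 = weightMeasure L P Set.univ := by
  simp [HPhiNormSq_weight]

theorem weightMeasure_univ_ne_zero (L P : Matrix (Fin n) (Fin n) ℂ) :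
    weightMeasure L P Set.univ ≠ 0 :=
  expMeasure_univ_ne_zero (by fun_prop)

theorem isFiniteMeasure_weightMeasure (hL : L.PosDef) (hP : P.IsSymm)
    (hG : (schurCompl L P).PosDef) : IsFiniteMeasure (weightMeasure L P) :=
  isFiniteMeasure_expMeasure (by fun_prop) (fun t x => by rw [weight_smul]; ring) fun x hx =>
    mul_pos (by positivity) (weight_pos hL hP hG hx)

theorem smulInvariantMeasure_circle_weightMeasure (L : Matrix (Fin n) (Fin n) ℂ) :
    SMulInvariantMeasure Circle (Fin n → ℂ) (weightMeasure L 0) :=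
  have := smulInvariantMeasure_circle_pi (ι := Fin n)
  smulInvariantMeasure_expMeasure (by fun_prop) fun c x =>
    congrArg (4 * π * ·) (weight_circle_smul L c x)

theorem weightMeasure_conv_weightMeasure (hL₁ : L₁.PosDef) (hL₂ : L₂.PosDef) (hP₁ : P₁.IsSymm)
    (hP₂ : P₂.IsSymm) (hG₁ : (schurCompl L₁ P₁).PosDef)
    (hlt : (schurCompl L₂ P₂ - schurCompl L₁ P₁).PosDef)
    (hpseudo : (schurCompl L₁ P₁)⁻¹ * (schurFactor L₁ P₁)ᴴ =
      (schurCompl L₂ P₂)⁻¹ * (schurFactor L₂ P₂)ᴴ) :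
    ∃ Z : ℝ≥0∞, weightMeasure L₂ P₂ ∗
      weightMeasure ((schurCompl L₁ P₁)⁻¹ - (schurCompl L₂ P₂)⁻¹)⁻¹ 0 =
        Z • weightMeasure L₁ P₁ := by
  set C := (schurCompl L₁ P₁)⁻¹ - (schurCompl L₂ P₂)⁻¹
  have hG₂ : (schurCompl L₂ P₂).PosDef := by simpa using hlt.add hG₁
  have hC : C.PosDef := posDef_inv_sub_inv hG₁ hlt
  refine ⟨_, expMeasure_conv_expMeasure
    (r := fun u => 4 * π * weight L₂ P₂ u + 4 * π * weight C⁻¹ 0 u)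
    (by fun_prop) (by fun_prop) (by fun_prop) fun x => ⟨C *ᵥ weightGrad L₁ P₁ x, fun w => ?_⟩⟩
  have hgrad : weightGrad C⁻¹ 0 (C *ᵥ weightGrad L₁ P₁ x) = weightGrad L₁ P₁ x := by
    change C⁻¹ *ᵥ C *ᵥ _ + 0ᴴ *ᵥ _ = _
    rw [mulVec_mulVec, nonsing_inv_mul _ ((isUnit_iff_isUnit_det _).1 hC.isUnit), one_mulVec,
      conjTranspose_zero, zero_mulVec, add_zero]
  rw [← mul_add, ← mul_add, ← mul_add, weight_sub_add_weight hL₂.1 hP₂ hC.inv.1 isSymm_zero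
    (weightGrad_sub_inv_sub_inv_mulVec hL₁ hL₂ hP₁ hP₂ hG₁ hG₂ hpseudo x) hgrad]

theorem HPhiNorm_mul_HPhiNorm_one_le (hL₁ : L₁.PosDef) (hL₂ : L₂.PosDef) (hP₁ : P₁.IsSymm)
    (hP₂ : P₂.IsSymm) (hG₁ : (schurCompl L₁ P₁).PosDef)
    (hlt : (schurCompl L₂ P₂ - schurCompl L₁ P₁).PosDef)
    (hpseudo : (schurCompl L₁ P₁)⁻¹ * (schurFactor L₁ P₁)ᴴ =
      (schurCompl L₂ P₂)⁻¹ * (schurFactor L₂ P₂)ᴴ) {f : (Fin n → ℂ) → ℂ}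
    (hf : Differentiable ℂ f) :
    HPhiNorm (weight L₂ P₂) f * HPhiNorm (weight L₁ P₁) 1 ≤
      HPhiNorm (weight L₂ P₂) 1 * HPhiNorm (weight L₁ P₁) f := by
  obtain ⟨Z, hconv⟩ := weightMeasure_conv_weightMeasure hL₁ hL₂ hP₁ hP₂ hG₁ hlt hpseudo
  set Q := ((schurCompl L₁ P₁)⁻¹ - (schurCompl L₂ P₂)⁻¹)⁻¹
  have hQ : Q.PosDef := (posDef_inv_sub_inv hG₁ hlt).inv
  have hfinite : IsFiniteMeasure (weightMeasure Q 0) :=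
    isFiniteMeasure_weightMeasure hQ isSymm_zero (by simpa [schurCompl] using hQ)
  have hnonzero : NeZero (weightMeasure Q 0) :=
    ⟨Measure.measure_univ_ne_zero.1 (weightMeasure_univ_ne_zero Q 0)⟩
  have hinv := smulInvariantMeasure_circle_weightMeasure Q
  have hsq := lintegral_enorm_mul_measure_univ_le hconv (hf.pow 2)
  simp only [Pi.pow_apply, ← HPhiNormSq_weight, ← HPhiNormSq_weight_one] at hsq
  have hhalf : (0 : ℝ) ≤ 1 / 2 := by norm_num
  simpa only [HPhiNorm, ENNReal.mul_rpow_of_nonneg _ _ hhalf] using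
    ENNReal.rpow_le_rpow hsq hhalf

/-- The Gaussian `g_T(x) = exp(πi T x·x)`. -/
def gaussian (T : Matrix (Fin n) (Fin n) ℂ) (x : Fin n → ℂ) : ℂ :=
  Complex.exp ((π : ℂ) * Complex.I * dotC (T *ᵥ x) x)

@[fun_prop]
theorem differentiable_gaussian (T : Matrix (Fin n) (Fin n) ℂ) :
    Differentiable ℂ (gaussian T) := by
  unfold gaussian dotC mulVec dotProduct
  fun_prop

theorem gaussian_mul_gaussian_neg (T : Matrix (Fin n) (Fin n) ℂ) :
    gaussian T * gaussian (-T) = 1 := by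
  ext x
  simp [gaussian, dotC, neg_mulVec, ← Complex.exp_add]

theorem weight_sub_I_smul (L P T : Matrix (Fin n) (Fin n) ℂ) (x : Fin n → ℂ) :
    weight L (P - Complex.I • T) x = weight L P x + (1 / 2) * (dotC (T *ᵥ x) x).im := by
  have hdot : dotC (T *ᵥ x) x = x ⬝ᵥ T *ᵥ x := dotProduct_comm _ _
  rw [weight_eq_re, weight_eq_re, hdot, sub_mulVec, smul_mulVec, dotProduct_sub, dotProduct_smul,
    smul_eq_mul, Complex.sub_re, Complex.I_mul_re]
  ring

theorem HPhiNorm_gaussian_mul (L P T : Matrix (Fin n) (Fin n) ℂ) (f : (Fin n → ℂ) → ℂ) :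
    HPhiNorm (weight L P) (gaussian T * f) = HPhiNorm (weight L (P - Complex.I • T)) f := by
  rw [HPhiNorm, HPhiNorm]
  congr 1
  refine lintegral_congr fun x => ?_
  have hre : ((π : ℂ) * Complex.I * dotC (T *ᵥ x) x).re = -(π * (dotC (T *ᵥ x) x).im) := by
    rw [mul_assoc, Complex.re_ofReal_mul, Complex.I_mul_re, mul_neg]
  rw [Pi.mul_apply, norm_mul, gaussian, Complex.norm_exp, hre, weight_sub_I_smul, mul_pow,
    ← exp_nat_mul, mul_right_comm, mul_comm, ← exp_add]
  congr 3
  push_cast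
  ring

theorem HPhiNorm_gaussian (L P T : Matrix (Fin n) (Fin n) ℂ) :
    HPhiNorm (weight L P) (gaussian T) = HPhiNorm (weight L (P - Complex.I • T)) 1 := by
  rw [← HPhiNorm_gaussian_mul, mul_one]

theorem HPhiNorm_gaussian_ne_top {T : Matrix (Fin n) (Fin n) ℂ} (hL : L.PosDef)
    (hP : (P - Complex.I • T).IsSymm) (hG : (schurCompl L (P - Complex.I • T)).PosDef) :
    HPhiNorm (weight L P) (gaussian T) ≠ ⊤ := by
  have := isFiniteMeasure_weightMeasure hL hP hG
  rw [HPhiNorm_gaussian, HPhiNorm, HPhiNormSq_weight_one]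
  exact ENNReal.rpow_ne_top_of_nonneg (by norm_num) (measure_ne_top _ _)

theorem HPhiNorm_gaussian_pos (L P T : Matrix (Fin n) (Fin n) ℂ) :
    0 < HPhiNorm (weight L P) (gaussian T) := by
  rw [HPhiNorm_gaussian, HPhiNorm, HPhiNormSq_weight_one, pos_iff_ne_zero, Ne,
    ENNReal.rpow_eq_zero_iff_of_pos (by norm_num)]
  exact weightMeasure_univ_ne_zero _ _

end Embedding

/-- the Gaussian g_T witnesses the norm of the embedding. -/
theorem gaussian_witnesses_norm (n : ℕ) (L₁ P₁ L₂ P₂ : Matrix (Fin n) (Fin n) ℂ)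
    (hL₁ : L₁.PosDef) (hL₂ : L₂.PosDef) (hP₁ : P₁.IsSymm) (hP₂ : P₂.IsSymm)
    (hlt : ∀ x : Fin n → ℂ, x ≠ 0 → weight L₁ P₁ x < weight L₂ P₂ x)
    (T : Matrix (Fin n) (Fin n) ℂ) (hT : T.IsSymm)
    (hgraph : (Set.range fun x : Fin n → ℂ => Sum.elim x (T.mulVec x)) =
        ↑(⨆ μ ∈ Set.Ioo (0 : ℝ) 1,
          Module.End.eigenspace
            (Matrix.toLin' ((Amat L₂ P₂)⁻¹ * Amat L₁ P₁)) (μ : ℂ))) :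
    0 < HPhiNorm (weight L₁ P₁) (fun x => Complex.exp ((π : ℂ) * Complex.I * dotC (T.mulVec x) x)) ∧
    HPhiNorm (weight L₁ P₁) (fun x => Complex.exp ((π : ℂ) * Complex.I * dotC (T.mulVec x) x)) ≠ ⊤ ∧
    HPhiNorm (weight L₂ P₂) (fun x => Complex.exp ((π : ℂ) * Complex.I * dotC (T.mulVec x) x)) ≠ ⊤ ∧
    HPhiNorm (weight L₂ P₂) (fun x => Complex.exp ((π : ℂ) * Complex.I * dotC (T.mulVec x) x)) /
        HPhiNorm (weight L₁ P₁) (fun x => Complex.exp ((π : ℂ) * Complex.I * dotC (T.mulVec x) x)) =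
      embedNorm (weight L₁ P₁) (weight L₂ P₂) := by
  have hP₁T : (P₁ - Complex.I • T).IsSymm := hP₁.sub (hT.smul _)
  have hP₂T : (P₂ - Complex.I • T).IsSymm := hP₂.sub (hT.smul _)
  have hltT : ∀ x, x ≠ 0 →
      weight L₁ (P₁ - Complex.I • T) x < weight L₂ (P₂ - Complex.I • T) x := by
    simpa only [weight_sub_I_smul, add_lt_add_iff_right] using hlt
  obtain ⟨D, hB, hG, htop⟩ :=
    exists_mul_eq_and_iSup_eigenspace_eq_top hL₁.1 hL₂ hP₁ hP₂ hgraph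
  have hΔ := posDef_schurCompl_sub_schurCompl hL₁ hL₂ hP₁T hP₂T hltT
  have hG₁ := posDef_of_eq_mul_of_iSup_eigenspace_eq_top (isHermitian_schurCompl hL₁.1) hΔ hG htop
  have hG₂ : (schurCompl L₂ (P₂ - Complex.I • T)).PosDef := by simpa using hΔ.add hG₁
  have hpseudo := inv_mul_conjTranspose_eq_of_eq_mul hG₁ hG₂ hG hB
  have hpos := HPhiNorm_gaussian_pos L₁ P₁ T
  have hfin₁ := HPhiNorm_gaussian_ne_top hL₁ hP₁T hG₁
  refine ⟨hpos, hfin₁, HPhiNorm_gaussian_ne_top hL₂ hP₂T hG₂,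
    HPhiNorm_div_HPhiNorm_eq_embedNorm (differentiable_gaussian T) hpos hfin₁ fun f hf => ?_⟩
  have hfactor : f = gaussian T * (gaussian (-T) * f) := by
    rw [← mul_assoc, gaussian_mul_gaussian_neg, one_mul]
  have hmax := HPhiNorm_mul_HPhiNorm_one_le hL₁ hL₂ hP₁T hP₂T hG₁ hΔ hpseudo
    ((differentiable_gaussian (-T)).mul hf)
  rwa [← HPhiNorm_gaussian, ← HPhiNorm_gaussian, ← HPhiNorm_gaussian_mul,
    ← HPhiNorm_gaussian_mul, ← hfactor] at hmax

end
end

section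
/- Let L₁, L₂ be n×n positive definite Hermitian matrices with L₂ − L₁ positive definite, and set Φ_j(x) = (1/2) L_j x·x̄ for j = 1, 2. Then the constant function 1 attains the norm of the embedding H_{Φ₁} → H_{Φ₂}: ‖1‖_{H_{Φ₂}} / ‖1‖_{H_{Φ₁}} = sup{‖f‖_{H_{Φ₂}}/‖f‖_{H_{Φ₁}} : f entire on ℂⁿ, 0 < ‖f‖_{H_{Φ₁}} < ∞} = (det L₁ / det L₂)^{1/2}. -/
open MeasureTheory Real Matrix
open scoped ENNReal ComplexOrder

noncomputable section

/-!
Let `γ` be the Gaussian measure with density `exp (-2 π |x|²)`. Choose `B` with `Bᴴ L₁ B = 1` and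
`Bᴴ L₂ B` diagonal. Since `L₁ ≤ L₂`, the diagonal entries are at least `1`, so rescaling by a
diagonal contraction `a` gives `(B a)ᴴ L₂ (B a) = 1`. With `g = f ∘ B`, the changes of variables
`x = B y` and `x = B a y` turn `det L₁ ‖f‖²_{Φ₁}` into `∫ |g|² dγ` and `det L₂ ‖f‖²_{Φ₂}` into
`∫ |g(a y)|² dγ(y)`. The contraction `a` is the corner of a unitary `[[a, c], [-c̄, ā]]`, which
preserves `γ ⊗ γ`, so `∫ |g|² dγ · γ(ℂⁿ) = ∬ |g(a y + c z)|² dγ(z) dγ(y)`. By rotation invariance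
of `γ` and the mean value property in `z`, this is at least `γ(ℂⁿ) ∫ |g(a y)|² dγ(y)`, with
equality when `f` is constant.
-/

section HermitianMatrix

variable {ι : Type*} [Fintype ι] [DecidableEq ι]

open scoped MatrixOrder in
lemma exists_conjTranspose_mul_mul_eq_one_eq_diagonal {A M : Matrix ι ι ℂ}
    (hA : A.PosDef) (hM : M.IsHermitian) :
    ∃ (B : Matrix ι ι ℂ) (d : ι → ℝ),
      Bᴴ * A * B = 1 ∧ Bᴴ * M * B = diagonal fun i => (d i : ℂ) := by
  obtain ⟨S, hS, rfl⟩ :=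
    CStarAlgebra.isStrictlyPositive_iff_eq_star_mul_self.mp hA.isStrictlyPositive
  have hSS : S * S⁻¹ = 1 := mul_nonsing_inv S ((isUnit_iff_isUnit_det S).mp hS)
  have hN : (S⁻¹ᴴ * M * S⁻¹).IsHermitian := isHermitian_conjTranspose_mul_mul _ hM
  let U := (hN.eigenvectorUnitary : Matrix ι ι ℂ)
  have hUU : Uᴴ * U = 1 := Unitary.coe_star_mul_self hN.eigenvectorUnitary
  refine ⟨S⁻¹ * U, hN.eigenvalues, ?_, ?_⟩
  · calc (S⁻¹ * U)ᴴ * (star S * S) * (S⁻¹ * U) = Uᴴ * (S * S⁻¹)ᴴ * (S * S⁻¹) * U := by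
          simp only [conjTranspose_mul, star_eq_conjTranspose, Matrix.mul_assoc]
      _ = 1 := by simp only [hSS, conjTranspose_one, Matrix.mul_one, hUU]
  · calc (S⁻¹ * U)ᴴ * M * (S⁻¹ * U) = Uᴴ * (S⁻¹ᴴ * M * S⁻¹) * U := by
          simp only [conjTranspose_mul, Matrix.mul_assoc]
      _ = _ := by
          have := hN.conjStarAlgAut_star_eigenvectorUnitary
          rwa [Unitary.conjStarAlgAut_star_apply] at this

lemma re_det_pos {L : Matrix ι ι ℂ} (hL : L.PosDef) : 0 < L.det.re :=
  (Complex.lt_def.1 hL.det_pos).1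

lemma det_eq_inv_normSq_det {B L : Matrix ι ι ℂ} (h : Bᴴ * L * B = 1) :
    L.det = (Complex.normSq B.det : ℂ)⁻¹ := by
  refine eq_inv_of_mul_eq_one_left ?_
  rw [← det_one (n := ι), ← h, det_mul, det_mul, det_conjTranspose, RCLike.star_def,
    Complex.normSq_eq_conj_mul_self]
  ring

lemma exists_diagonal_contraction_conjTranspose_mul_mul_eq_one {L₁ L₂ : Matrix ι ι ℂ}
    (hL₁ : L₁.PosDef) (hle : (L₂ - L₁).PosSemidef) :
    ∃ (B : Matrix ι ι ℂ) (a : ι → ℂ), (∀ i, ‖a i‖ ≤ 1) ∧ Bᴴ * L₁ * B = 1 ∧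
      (B * diagonal a)ᴴ * L₂ * (B * diagonal a) = 1 := by
  have hL₂ : L₂.IsHermitian := by simpa using hle.isHermitian.add hL₁.isHermitian
  obtain ⟨B, d, hB₁, hB₂⟩ := exists_conjTranspose_mul_mul_eq_one_eq_diagonal hL₁ hL₂
  have hd (i : ι) : 1 ≤ d i := by
    have hdiag : Bᴴ * (L₂ - L₁) * B = diagonal fun i => (d i : ℂ) - 1 := by
      rw [Matrix.mul_sub, Matrix.sub_mul, hB₁, hB₂, ← diagonal_one, diagonal_sub]
    have := posSemidef_diagonal_iff.1 (hdiag ▸ hle.conjTranspose_mul_mul_same B) i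
    exact_mod_cast sub_nonneg.1 this
  let a : ι → ℂ := fun i => ((√(d i))⁻¹ : ℝ)
  have hscale (i : ι) : star (a i) * d i * a i = 1 := by
    have hsqrt : √(d i) ≠ 0 := (Real.sqrt_pos.2 (one_pos.trans_le (hd i))).ne'
    have hreal : (√(d i))⁻¹ * d i * (√(d i))⁻¹ = 1 := by
      nth_rw 2 [← Real.mul_self_sqrt (zero_le_one.trans (hd i))]
      field_simp
    simp only [a, RCLike.star_def, Complex.conj_ofReal]
    exact_mod_cast hreal
  refine ⟨B, a, fun i => ?_, hB₁, ?_⟩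
  · rw [Complex.norm_real, Real.norm_of_nonneg (inv_nonneg.2 (Real.sqrt_nonneg _))]
    exact inv_le_one_of_one_le₀ (Real.one_le_sqrt.2 (hd i))
  · calc (B * diagonal a)ᴴ * L₂ * (B * diagonal a)
        = (diagonal a)ᴴ * (Bᴴ * L₂ * B) * diagonal a := by
          simp only [conjTranspose_mul, Matrix.mul_assoc]
      _ = diagonal fun i => star (a i) * d i * a i := by
          simp only [hB₂, diagonal_conjTranspose, diagonal_mul_diagonal, Pi.star_apply]
      _ = 1 := diagonal_eq_one.2 (funext hscale)

lemma fromBlocks_diagonal_conjTranspose_mul_self {a c : ι → ℂ}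
    (h : ∀ i, star (a i) * a i + star (c i) * c i = 1) :
    (fromBlocks (diagonal a) (diagonal c) (diagonal (-star c)) (diagonal (star a)))ᴴ *
      fromBlocks (diagonal a) (diagonal c) (diagonal (-star c)) (diagonal (star a)) = 1 := by
  rw [fromBlocks_conjTranspose, fromBlocks_multiply, ← fromBlocks_one]
  simp only [diagonal_conjTranspose, diagonal_mul_diagonal, diagonal_add]
  congr 1
  · exact diagonal_eq_one.2 (funext fun i => by simpa [mul_comm] using h i)
  · exact diagonal_eq_zero.2 (funext fun i => by simp [mul_comm])
  · exact diagonal_eq_zero.2 (funext fun i => by simp [mul_comm])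
  · exact diagonal_eq_one.2 (funext fun i => by simpa [mul_comm, add_comm] using h i)

lemma exists_diagonal_isometric_dilation {a : ι → ℂ} (ha : ∀ i, ‖a i‖ ≤ 1) :
    ∃ B C D : Matrix ι ι ℂ,
      (fromBlocks (diagonal a) B C D)ᴴ * fromBlocks (diagonal a) B C D = 1 := by
  let c : ι → ℂ := fun i => √(1 - ‖a i‖ ^ 2)
  refine ⟨diagonal c, diagonal (-star c), diagonal (star a),
    fromBlocks_diagonal_conjTranspose_mul_self fun i => ?_⟩
  have hai : ‖a i‖ ^ 2 ≤ 1 := pow_le_one₀ (norm_nonneg _) (ha i)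
  simp only [c, RCLike.star_def, ← Complex.normSq_eq_conj_mul_self, Complex.normSq_eq_norm_sq,
    Complex.norm_real, Real.norm_eq_abs, sq_abs, Real.sq_sqrt (sub_nonneg.2 hai)]
  norm_num

end HermitianMatrix

section MeanValue

lemma differentiable_mulVec {ι κ : Type*} [Fintype ι] [Finite κ] (A : Matrix κ ι ℂ) :
    Differentiable ℂ (A *ᵥ ·) :=
  (mulVecLin A).toContinuousLinearMap.differentiable

variable {F : Type*} [NormedAddCommGroup F] [NormedSpace ℂ F] [CompleteSpace F]

lemma enorm_le_setLAverage_circleMap {h : ℂ → F} (hh : Differentiable ℂ h) (c : ℂ) (R : ℝ) :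
    ‖h c‖ₑ ≤ ⨍⁻ θ in Set.uIoc 0 (2 * π), ‖h (circleMap c R θ)‖ₑ ∂volume := by
  rw [← hh.diffContOnCl.circleAverage (c := c) (R := R), circleAverage_eq_intervalAverage]
  exact enorm_integral_le_lintegral_enorm _

lemma enorm_apply_zero_mul_measure_univ_le_lintegral {E : Type*} [NormedAddCommGroup E]
    [NormedSpace ℂ E] [SecondCountableTopology E] [MeasurableSpace E] [BorelSpace E]
    {μ : Measure E} [SFinite μ]
    (hμ : ∀ c : ℂ, ‖c‖ = 1 → MeasurePreserving (c • · : E → E) μ μ)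
    {g : E → F} (hg : Differentiable ℂ g) :
    ‖g 0‖ₑ * μ Set.univ ≤ ∫⁻ z, ‖g z‖ₑ ∂μ := by
  have hgc : Continuous g := hg.continuous
  have hrot (θ : ℝ) : ∫⁻ z, ‖g (circleMap 0 1 θ • z)‖ₑ ∂μ = ∫⁻ z, ‖g z‖ₑ ∂μ :=
    (hμ _ (by simp)).lintegral_comp hgc.enorm.measurable
  calc ‖g 0‖ₑ * μ Set.univ = ∫⁻ _, ‖g 0‖ₑ ∂μ := (lintegral_const _).symm
    _ ≤ ∫⁻ z, ⨍⁻ θ in Set.uIoc 0 (2 * π), ‖g (circleMap 0 1 θ • z)‖ₑ ∂volume ∂μ :=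
        lintegral_mono fun z => by
          simpa using! enorm_le_setLAverage_circleMap (h := fun w => g (w • z)) (by fun_prop) 0 1
    _ = ⨍⁻ θ in Set.uIoc 0 (2 * π), ∫⁻ z, ‖g (circleMap 0 1 θ • z)‖ₑ ∂μ ∂volume :=
        lintegral_lintegral_swap (Continuous.aemeasurable (by fun_prop))
    _ = ∫⁻ z, ‖g z‖ₑ ∂μ := by
        simp_rw [hrot]
        refine setLAverage_const ?_ ?_ _ <;> simp [Set.uIoc, pi_pos.le, pi_pos, ENNReal.mul_eq_top]

end MeanValue

section FockMeasure

variable {ι κ : Type*} [Fintype ι] [Fintype κ]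

/-- The Gaussian `x ↦ exp (-2 π L x · x̄)`, valued in `[0, ∞]`. -/
def fockDensity (L : Matrix ι ι ℂ) (x : ι → ℂ) : ℝ≥0∞ :=
  ENNReal.ofReal (Real.exp (-(2 * π) * (star x ⬝ᵥ L *ᵥ x).re))

/-- The unnormalized Gaussian measure with density `exp (-2 π L x · x̄)`, so that
`‖f‖²_{H_Φ} = ∫ |f|² ∂(fockMeasure L)` when `Φ(x) = (1/2) L x · x̄`. -/
def fockMeasure (L : Matrix ι ι ℂ) : Measure (ι → ℂ) :=
  volume.withDensity (fockDensity L)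

instance (L : Matrix ι ι ℂ) : SFinite (fockMeasure L) :=
  inferInstanceAs (SFinite (volume.withDensity (fockDensity L)))

lemma measurable_fockDensity (L : Matrix ι ι ℂ) : Measurable (fockDensity L) := by
  unfold fockDensity
  fun_prop

lemma lintegral_fockMeasure (L : Matrix ι ι ℂ) {φ : (ι → ℂ) → ℝ≥0∞} (hφ : Measurable φ) :
    ∫⁻ x, φ x ∂fockMeasure L = ∫⁻ x, fockDensity L x * φ x :=
  lintegral_withDensity_eq_lintegral_mul _ (measurable_fockDensity L) hφ

lemma fockMeasure_univ_ne_zero (L : Matrix ι ι ℂ) : fockMeasure L Set.univ ≠ 0 := by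
  rw [fockMeasure, Measure.measure_univ_ne_zero, Ne,
    withDensity_eq_zero_iff (measurable_fockDensity L).aemeasurable]
  intro h
  obtain ⟨x, hx⟩ := h.exists
  exact (ENNReal.ofReal_pos.2 (Real.exp_pos _)).ne' hx

lemma fockDensity_conjTranspose_mul_mul (L : Matrix κ κ ℂ) (B : Matrix κ ι ℂ) (x : ι → ℂ) :
    fockDensity (Bᴴ * L * B) x = fockDensity L (B *ᵥ x) := by
  simp only [fockDensity, star_mulVec, ← mulVec_mulVec, dotProduct_mulVec, vecMul_vecMul,
    Matrix.mul_assoc]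

lemma fockDensity_fromBlocks_zero (L : Matrix ι ι ℂ) (M : Matrix κ κ ℂ) (y : ι → ℂ)
    (z : κ → ℂ) :
    fockDensity (fromBlocks L 0 0 M) (Sum.elim y z) = fockDensity L y * fockDensity M z := by
  have hstar : star (Sum.elim y z) = Sum.elim (star y) (star z) := by ext (i | i) <;> rfl
  rw [fockDensity, fockDensity, fockDensity, ← ENNReal.ofReal_mul (Real.exp_nonneg _),
    ← Real.exp_add, ← mul_add, ← Complex.add_re, fromBlocks_mulVec, hstar,
    sumElim_dotProduct_sumElim]
  simp

lemma lintegral_fockMeasure_fromBlocks_zero (L : Matrix ι ι ℂ) (M : Matrix κ κ ℂ)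
    {φ : (ι ⊕ κ → ℂ) → ℝ≥0∞} (hφ : Measurable φ) :
    ∫⁻ w, φ w ∂fockMeasure (fromBlocks L 0 0 M) =
      ∫⁻ y, ∫⁻ z, φ (Sum.elim y z) ∂fockMeasure M ∂fockMeasure L := by
  have helim : Measurable fun p : (ι → ℂ) × (κ → ℂ) => Sum.elim p.1 p.2 :=
    (MeasurableEquiv.sumPiEquivProdPi fun _ : ι ⊕ κ => ℂ).symm.measurable
  have hvol : MeasurePreserving (fun p : (ι → ℂ) × (κ → ℂ) => Sum.elim p.1 p.2) volume volume :=
    volume_measurePreserving_sumPiEquivProdPi_symm fun _ => ℂ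
  have hL := measurable_fockDensity L
  have hM := measurable_fockDensity M
  rw [lintegral_fockMeasure _ hφ]
  calc ∫⁻ w, fockDensity (fromBlocks L 0 0 M) w * φ w
      = ∫⁻ p : (ι → ℂ) × (κ → ℂ),
          fockDensity L p.1 * fockDensity M p.2 * φ (Sum.elim p.1 p.2) := by
        simp only [← fockDensity_fromBlocks_zero]
        exact (hvol.lintegral_comp ((measurable_fockDensity _).mul hφ)).symm
    _ = ∫⁻ p, φ (Sum.elim p.1 p.2) ∂(fockMeasure L).prod (fockMeasure M) := by
        rw [fockMeasure, fockMeasure, prod_withDensity hL hM]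
        exact (lintegral_withDensity_eq_lintegral_mul _ (by fun_prop) (hφ.comp helim)).symm
    _ = ∫⁻ y, ∫⁻ z, φ (Sum.elim y z) ∂fockMeasure M ∂fockMeasure L :=
        lintegral_prod _ (hφ.comp helim).aemeasurable

variable [DecidableEq ι]

lemma map_mulVec_volume {B : Matrix ι ι ℂ} (hB : B.det ≠ 0) :
    (volume : Measure (ι → ℂ)).map (B *ᵥ ·) =
      ENNReal.ofReal (Complex.normSq B.det)⁻¹ • volume := by
  have hdet : LinearMap.det ((toLin' B).restrictScalars ℝ) = Complex.normSq B.det := by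
    rw [LinearMap.det_restrictScalars, LinearMap.det_toLin', Algebra.norm_complex_apply]
  have h := Measure.map_linearMap_addHaar_eq_smul_addHaar (volume : Measure (ι → ℂ))
    (f := (toLin' B).restrictScalars ℝ) (by simpa [hdet] using hB)
  rwa [hdet, abs_of_nonneg (inv_nonneg.2 (Complex.normSq_nonneg _))] at h

lemma map_mulVec_fockMeasure {B : Matrix ι ι ℂ} (hB : B.det ≠ 0) (L : Matrix ι ι ℂ) :
    (fockMeasure (Bᴴ * L * B)).map (B *ᵥ ·) =
      ENNReal.ofReal (Complex.normSq B.det)⁻¹ • fockMeasure L := by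
  have hBm : Measurable (B *ᵥ · : (ι → ℂ) → ι → ℂ) := Continuous.measurable (by fun_prop)
  refine Measure.ext_of_lintegral _ fun φ hφ => ?_
  rw [lintegral_map hφ hBm,
    lintegral_fockMeasure (Bᴴ * L * B) (φ := fun x => φ (B *ᵥ x)) (hφ.comp hBm),
    lintegral_smul_measure, lintegral_fockMeasure _ hφ, ← lintegral_smul_measure,
    ← map_mulVec_volume hB]
  simp only [fockDensity_conjTranspose_mul_mul]
  exact (lintegral_map ((measurable_fockDensity L).mul hφ) hBm).symm

lemma lintegral_comp_mulVec_fockMeasure_one {B L : Matrix ι ι ℂ} (h : Bᴴ * L * B = 1)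
    {φ : (ι → ℂ) → ℝ≥0∞} (hφ : Measurable φ) :
    ∫⁻ x, φ (B *ᵥ x) ∂fockMeasure 1 = ENNReal.ofReal L.det.re * ∫⁻ x, φ x ∂fockMeasure L := by
  have hB : B.det ≠ 0 := by
    intro hB
    simpa [hB] using congrArg det h
  have hL : L.det.re = (Complex.normSq B.det)⁻¹ := by
    rw [det_eq_inv_normSq_det h, ← Complex.ofReal_inv, Complex.ofReal_re]
  rw [← h, ← lintegral_map hφ (Continuous.measurable (by fun_prop)), map_mulVec_fockMeasure hB,
    lintegral_smul_measure, hL, smul_eq_mul]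

lemma measurePreserving_mulVec_fockMeasure_one {U : Matrix ι ι ℂ} (hU : Uᴴ * U = 1) :
    MeasurePreserving (U *ᵥ ·) (fockMeasure (1 : Matrix ι ι ℂ)) (fockMeasure 1) := by
  have hU1 : Uᴴ * 1 * U = 1 := by rwa [Matrix.mul_one]
  have hm : Measurable (U *ᵥ · : (ι → ℂ) → ι → ℂ) := Continuous.measurable (by fun_prop)
  refine ⟨hm, Measure.ext_of_lintegral _ fun φ hφ => ?_⟩
  rw [lintegral_map hφ hm, lintegral_comp_mulVec_fockMeasure_one hU1 hφ]
  simp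

lemma lintegral_lintegral_unitary_fockMeasure_one [DecidableEq κ] {A : Matrix ι ι ℂ}
    {B : Matrix ι κ ℂ} {C : Matrix κ ι ℂ} {D : Matrix κ κ ℂ}
    (hU : (fromBlocks A B C D)ᴴ * fromBlocks A B C D = 1)
    {φ : (ι → ℂ) → ℝ≥0∞} (hφ : Measurable φ) :
    ∫⁻ y, ∫⁻ z, φ (A *ᵥ y + B *ᵥ z) ∂fockMeasure 1 ∂fockMeasure 1 =
      (∫⁻ y, φ y ∂fockMeasure 1) * fockMeasure (1 : Matrix κ κ ℂ) Set.univ := by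
  have hinl : Measurable fun w : ι ⊕ κ → ℂ => φ (w ∘ Sum.inl) := hφ.comp (by fun_prop)
  calc ∫⁻ y, ∫⁻ z, φ (A *ᵥ y + B *ᵥ z) ∂fockMeasure 1 ∂fockMeasure 1
      = ∫⁻ w, φ ((fromBlocks A B C D *ᵥ w) ∘ Sum.inl) ∂fockMeasure 1 := by
        rw [← fromBlocks_one, lintegral_fockMeasure_fromBlocks_zero]
        · simp [fromBlocks_mulVec]
        · exact hinl.comp (Continuous.measurable (by fun_prop))
    _ = ∫⁻ w, φ (w ∘ Sum.inl) ∂fockMeasure 1 :=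
        (measurePreserving_mulVec_fockMeasure_one hU).lintegral_comp hinl
    _ = (∫⁻ y, φ y ∂fockMeasure 1) * fockMeasure (1 : Matrix κ κ ℂ) Set.univ := by
        rw [← fromBlocks_one, lintegral_fockMeasure_fromBlocks_zero _ _ hinl]
        simp only [Sum.elim_comp_inl, lintegral_const]
        exact lintegral_mul_const _ hφ

lemma fockDensity_one (x : ι → ℂ) :
    fockDensity 1 x = ENNReal.ofReal (∏ i, Real.exp (-(2 * π) * ‖x i‖ ^ 2)) := by
  have hx : (star x ⬝ᵥ x).re = ∑ i, ‖x i‖ ^ 2 := by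
    simp only [dotProduct, Complex.re_sum, Pi.star_apply, RCLike.star_def,
      ← Complex.normSq_eq_conj_mul_self, Complex.ofReal_re, Complex.normSq_eq_norm_sq]
  rw [fockDensity, one_mulVec, hx, Finset.mul_sum, Real.exp_sum]

instance : IsFiniteMeasure (fockMeasure (1 : Matrix ι ι ℂ)) := by
  have hint : Integrable fun z : ℂ => Real.exp (-(2 * π) * ‖z‖ ^ 2) := by
    refine (GaussianFourier.integrable_cexp_neg_mul_sq_norm_add (V := ℂ) (b := (2 * π : ℝ))
      (by simpa using pi_pos) 0 0).norm.congr (.of_forall fun z => ?_)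
    simp only [Complex.norm_exp]
    norm_cast
    simp
  refine isFiniteMeasure_withDensity ?_
  simp only [fockDensity_one]
  exact (Integrable.fintype_prod fun _ => hint).lintegral_lt_top.ne

lemma measurePreserving_smul_fockMeasure_one {w : ℂ} (hw : ‖w‖ = 1) :
    MeasurePreserving (w • · : (ι → ℂ) → ι → ℂ) (fockMeasure 1) (fockMeasure 1) := by
  have hw' : star w * w = 1 := by
    rw [RCLike.star_def, ← Complex.normSq_eq_conj_mul_self, Complex.normSq_eq_norm_sq, hw,
      one_pow, Complex.ofReal_one]
  have hU : (w • (1 : Matrix ι ι ℂ))ᴴ * w • (1 : Matrix ι ι ℂ) = 1 := by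
    rw [conjTranspose_smul, smul_mul_smul_comm, hw', conjTranspose_one, Matrix.mul_one, one_smul]
  simpa only [smul_mulVec, one_mulVec] using measurePreserving_mulVec_fockMeasure_one hU

lemma lintegral_enorm_comp_diagonal_le {F : Type*} [NormedAddCommGroup F] [NormedSpace ℂ F]
    [CompleteSpace F] {a : ι → ℂ} (ha : ∀ i, ‖a i‖ ≤ 1) {g : (ι → ℂ) → F}
    (hg : Differentiable ℂ g) :
    ∫⁻ y, ‖g (diagonal a *ᵥ y)‖ₑ ∂fockMeasure 1 ≤ ∫⁻ y, ‖g y‖ₑ ∂fockMeasure 1 := by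
  obtain ⟨B, C, D, hU⟩ := exists_diagonal_isometric_dilation ha
  have hgc : Continuous g := hg.continuous
  refine (ENNReal.mul_le_mul_iff_left (fockMeasure_univ_ne_zero (1 : Matrix ι ι ℂ))
    (measure_ne_top _ _)).1 ?_
  calc (∫⁻ y, ‖g (diagonal a *ᵥ y)‖ₑ ∂fockMeasure 1) * fockMeasure (1 : Matrix ι ι ℂ) Set.univ
      = ∫⁻ y, ‖g (diagonal a *ᵥ y)‖ₑ * fockMeasure (1 : Matrix ι ι ℂ) Set.univ ∂fockMeasure 1 :=
        (lintegral_mul_const _ (Continuous.measurable (by fun_prop))).symm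
    _ ≤ ∫⁻ y, ∫⁻ z, ‖g (diagonal a *ᵥ y + B *ᵥ z)‖ₑ ∂fockMeasure 1 ∂fockMeasure 1 :=
        lintegral_mono fun y => by
          simpa using enorm_apply_zero_mul_measure_univ_le_lintegral
            (fun w hw => measurePreserving_smul_fockMeasure_one hw)
            (g := fun z => g (diagonal a *ᵥ y + B *ᵥ z))
            (hg.comp ((differentiable_mulVec B).const_add _))
    _ = (∫⁻ y, ‖g y‖ₑ ∂fockMeasure 1) * fockMeasure (1 : Matrix ι ι ℂ) Set.univ :=
        lintegral_lintegral_unitary_fockMeasure_one hU hgc.enorm.measurable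

end FockMeasure

section HPhi

variable {n : ℕ} {L L₁ L₂ : Matrix (Fin n) (Fin n) ℂ}

lemma hPhiNormSq_weight (L : Matrix (Fin n) (Fin n) ℂ) {f : (Fin n → ℂ) → ℂ}
    (hf : Measurable f) :
    HPhiNormSq (weight L 0) f = ∫⁻ x, ‖f x ^ 2‖ₑ ∂fockMeasure L := by
  have hweight (x : Fin n → ℂ) :
      -4 * π * weight L 0 x = -(2 * π) * (star x ⬝ᵥ L *ᵥ x).re := by
    have hL : dotC (L *ᵥ x) (star x) = star x ⬝ᵥ L *ᵥ x := dotProduct_comm _ _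
    have hzero : dotC ((0 : Matrix (Fin n) (Fin n) ℂ) *ᵥ x) x = 0 := by simp [dotC]
    rw [weight, hL, hzero, Complex.zero_re]
    ring
  rw [lintegral_fockMeasure L (by fun_prop), HPhiNormSq]
  refine lintegral_congr fun x => ?_
  rw [hweight, mul_comm, ENNReal.ofReal_mul (Real.exp_nonneg _), ← norm_pow, ofReal_norm,
    fockDensity]

lemma ofReal_det_mul_hPhiNormSq_le (hL₁ : L₁.PosDef) (hle : (L₂ - L₁).PosSemidef)
    {f : (Fin n → ℂ) → ℂ} (hf : Differentiable ℂ f) :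
    ENNReal.ofReal L₂.det.re * HPhiNormSq (weight L₂ 0) f ≤
      ENNReal.ofReal L₁.det.re * HPhiNormSq (weight L₁ 0) f := by
  obtain ⟨B, a, ha, hB₁, hB₂⟩ :=
    exists_diagonal_contraction_conjTranspose_mul_mul_eq_one hL₁ hle
  have hfm : Measurable f := hf.continuous.measurable
  have hsq : Measurable fun x => ‖f x ^ 2‖ₑ := (hfm.pow_const 2).enorm
  have hfB : Differentiable ℂ fun x => f (B *ᵥ x) ^ 2 := (hf.comp (differentiable_mulVec B)).pow 2
  rw [hPhiNormSq_weight L₁ hfm, hPhiNormSq_weight L₂ hfm,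
    ← lintegral_comp_mulVec_fockMeasure_one hB₁ hsq,
    ← lintegral_comp_mulVec_fockMeasure_one hB₂ hsq]
  simpa only [mulVec_mulVec] using lintegral_enorm_comp_diagonal_le ha hfB

lemma ofReal_det_mul_hPhiNormSq_one (hL : L.PosDef) :
    ENNReal.ofReal L.det.re * HPhiNormSq (weight L 0) (fun _ => 1) =
      fockMeasure (1 : Matrix (Fin n) (Fin n) ℂ) Set.univ := by
  obtain ⟨B, -, hB, -⟩ := exists_conjTranspose_mul_mul_eq_one_eq_diagonal hL hL.isHermitian
  rw [hPhiNormSq_weight L measurable_const,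
    ← lintegral_comp_mulVec_fockMeasure_one hB (by fun_prop)]
  simp

lemma hPhiNorm_one_pos (L : Matrix (Fin n) (Fin n) ℂ) : 0 < HPhiNorm (weight L 0) fun _ => 1 := by
  have hpos : 0 < HPhiNormSq (weight L 0) fun _ => 1 := by
    simpa [hPhiNormSq_weight, measurable_const, pos_iff_ne_zero] using fockMeasure_univ_ne_zero L
  exact ENNReal.rpow_pos_of_nonneg hpos one_half_pos.le

lemma hPhiNorm_one_ne_top (hL : L.PosDef) : HPhiNorm (weight L 0) (fun _ => 1) ≠ ⊤ := by
  refine ENNReal.rpow_ne_top_of_nonneg one_half_pos.le fun htop => ?_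
  have hmeasure := ofReal_det_mul_hPhiNormSq_one hL
  rw [htop, ENNReal.mul_top (ENNReal.ofReal_pos.2 (re_det_pos hL)).ne'] at hmeasure
  exact measure_ne_top _ _ hmeasure.symm

lemma ofReal_rpow_mul_hPhiNorm {r : ℝ} (hr : 0 ≤ r) (Φ : (Fin n → ℂ) → ℝ)
    (f : (Fin n → ℂ) → ℂ) :
    ENNReal.ofReal (r ^ ((1 : ℝ) / 2)) * HPhiNorm Φ f =
      (ENNReal.ofReal r * HPhiNormSq Φ f) ^ ((1 : ℝ) / 2) := by
  rw [HPhiNorm, ENNReal.mul_rpow_of_nonneg _ _ one_half_pos.le,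
    ENNReal.ofReal_rpow_of_nonneg hr one_half_pos.le]

lemma hPhiNorm_weight_le (hL₁ : L₁.PosDef) (hle : (L₂ - L₁).PosSemidef)
    {f : (Fin n → ℂ) → ℂ} (hf : Differentiable ℂ f) :
    HPhiNorm (weight L₂ 0) f ≤
      ENNReal.ofReal ((L₁.det.re / L₂.det.re) ^ ((1 : ℝ) / 2)) * HPhiNorm (weight L₁ 0) f := by
  have hL₂ : L₂.PosDef := by simpa using hL₁.add_posSemidef hle
  have hd₂ := re_det_pos hL₂
  rw [ofReal_rpow_mul_hPhiNorm (div_pos (re_det_pos hL₁) hd₂).le, HPhiNorm]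
  refine ENNReal.rpow_le_rpow ?_ one_half_pos.le
  rw [ENNReal.ofReal_div_of_pos hd₂, ENNReal.mul_comm_div, ← mul_div_assoc,
    ENNReal.le_div_iff_mul_le (.inl (ENNReal.ofReal_pos.2 hd₂).ne') (.inl ENNReal.ofReal_ne_top),
    mul_comm]
  exact ofReal_det_mul_hPhiNormSq_le hL₁ hle hf

lemma hPhiNorm_weight_one_eq (hL₁ : L₁.PosDef) (hL₂ : L₂.PosDef) :
    HPhiNorm (weight L₂ 0) (fun _ => 1) =
      ENNReal.ofReal ((L₁.det.re / L₂.det.re) ^ ((1 : ℝ) / 2)) *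
        HPhiNorm (weight L₁ 0) (fun _ => 1) := by
  have hd₂ := re_det_pos hL₂
  rw [ofReal_rpow_mul_hPhiNorm (div_pos (re_det_pos hL₁) hd₂).le, HPhiNorm]
  congr 1
  rw [ENNReal.ofReal_div_of_pos hd₂, ENNReal.mul_comm_div, ← mul_div_assoc,
    ENNReal.eq_div_iff (ENNReal.ofReal_pos.2 hd₂).ne' ENNReal.ofReal_ne_top,
    ofReal_det_mul_hPhiNormSq_one hL₁, ofReal_det_mul_hPhiNormSq_one hL₂]

end HPhi

theorem constant_attains_norm_general (n : ℕ) (L₁ L₂ : Matrix (Fin n) (Fin n) ℂ)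
    (hL₁ : L₁.PosDef) (hle : (L₂ - L₁).PosSemidef) :
    HPhiNorm (weight L₂ 0) (fun _ => 1) / HPhiNorm (weight L₁ 0) (fun _ => 1) =
        embedNorm (weight L₁ 0) (weight L₂ 0) ∧
      embedNorm (weight L₁ 0) (weight L₂ 0) =
        ENNReal.ofReal ((L₁.det.re / L₂.det.re) ^ ((1 : ℝ) / 2)) := by
  have hL₂ : L₂.PosDef := by simpa using hL₁.add_posSemidef hle
  have hpos := hPhiNorm_one_pos L₁
  have htop := hPhiNorm_one_ne_top hL₁
  have hone : HPhiNorm (weight L₂ 0) (fun _ => 1) / HPhiNorm (weight L₁ 0) (fun _ => 1) =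
      ENNReal.ofReal ((L₁.det.re / L₂.det.re) ^ ((1 : ℝ) / 2)) := by
    rw [hPhiNorm_weight_one_eq hL₁ hL₂, ENNReal.mul_div_cancel_right hpos.ne' htop]
  have hembed : embedNorm (weight L₁ 0) (weight L₂ 0) =
      ENNReal.ofReal ((L₁.det.re / L₂.det.re) ^ ((1 : ℝ) / 2)) :=
    le_antisymm
      (iSup_le fun f => ENNReal.div_le_of_le_mul (hPhiNorm_weight_le hL₁ hle f.2.1))
      (hone ▸ le_iSup_of_le ⟨fun _ => 1, differentiable_const 1, hpos, htop⟩ le_rfl)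
  exact ⟨hone.trans hembed.symm, hembed⟩

/-- the constant function 1 attains the embedding norm for Levi weights. -/
theorem constant_attains_norm (n : ℕ) (L₁ L₂ : Matrix (Fin n) (Fin n) ℂ)
    (hL₁ : L₁.PosDef) (hL₂ : L₂.PosDef) (hlt : (L₂ - L₁).PosDef) :
    HPhiNorm (weight L₂ 0) (fun _ => 1) / HPhiNorm (weight L₁ 0) (fun _ => 1) =
        embedNorm (weight L₁ 0) (weight L₂ 0) ∧
      embedNorm (weight L₁ 0) (weight L₂ 0) =
        ENNReal.ofReal ((L₁.det.re / L₂.det.re) ^ ((1 : ℝ) / 2)) :=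
  constant_attains_norm_general n L₁ L₂ hL₁ hlt.posSemidef

end
end
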